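/- For every 0 < ε ≤ 1/4 and k ∈ ℕ there exists δ ∈ ℕ with the following property. Let G = (V,E) be a finite k-uniform linear hypergraph with edge correspondence σ and weighted lists of colours (L,μ), and let ℓ, n > δ satisfy: (a) μ(e,c) ∈ [exp(−n^{1/20}), 1] for every edge e and c ∈ L(e); (b) 3ek > ℓ/n > 1+ε; (c) |L(e)|_μ = ℓ for every edge e ∈ E; and (d) |N_{G,L,σ}(e,v,c)|_μ ≤ n for every edge e ∈ E, vertex v ∈ e and colour c ∈ ℕ. Then there is a partial (L,σ)-colouring γ of G with the following properties. Let G' = (V',E') be the subhypergraph of edges not coloured by γ, and for each e ∈ E' let L'(e) be obtained from L(e) by removing every colour c such that some edge f of G incident to e is coloured by γ and (f,γ(f)) blocks (e,c). Then there exist weights μ'(e) : L'(e) → (0,1] and numbers ℓ', n' > 0 such that, for every edge e ∈ E', vertex v ∈ e and colour c ∈ L'(e): (a') n' ≥ (1 − 5k/ln n)·n; (b') ℓ'/n' ≥ (1 + ε/(16 ln n))·(ℓ/n); (c') |L'(e)|_{μ'} = ℓ'; (d') |N_{G',L',σ}(e,v,c)|_{μ'} ≤ n'; and (e') (1 − 2/ℓ)·μ(e,c)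 ≤ μ'(e,c) ≤ μ(e,c). -/

import Mathlib

/-- Two hyperedges are incident if they are distinct and intersect. -/
def HIncident {V : Type} [DecidableEq V] (e f : Finset V) : Prop :=
  e ≠ f ∧ (e ∩ f).Nonempty

instance {V : Type} [DecidableEq V] (e f : Finset V) : Decidable (HIncident e f) :=
  inferInstanceAs (Decidable (e ≠ f ∧ (e ∩ f).Nonempty))

/-- `σ` is an edge correspondence on the edge set `E`: for incident edges,
`σ_{f,e}` is the inverse of `σ_{e,f}`. -/
def IsEdgeCorrespondence {V : Type} [DecidableEq V] (E : Finset (Finset V))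
    (σ : Finset V → Finset V → ℕ ≃ ℕ) : Prop :=
  ∀ e ∈ E, ∀ f ∈ E, HIncident e f → σ f e = (σ e f).symm

/-- The weighted size `|N_{G,L,σ}(e,v,c)|_μ` of the colour neighbourhood of `(e,v,c)`:
the `μ`-weight of all pairs `(f, c')` with `v ∈ f`, `f ≠ e`, `c' ∈ L f` and
`(f, c')` blocking `(e, c)`, i.e. `σ f e c' = c`. -/
def NWeight {V : Type} [DecidableEq V] (E : Finset (Finset V))
    (L : Finset V → Finset ℕ) (μ : Finset V → ℕ → ℝ)
    (σ : Finset V → Finset V → ℕ ≃ ℕ) (e : Finset V) (v : V) (c : ℕ) : ℝ :=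
  ∑ f ∈ E.filter (fun f => v ∈ f ∧ f ≠ e),
    ∑ c' ∈ (L f).filter (fun c' => σ f e c' = c), μ f c'

/-- An `(L,σ)`-colouring of the hypergraph with edge set `E`. -/
def IsLσColouring {V : Type} [DecidableEq V] (E : Finset (Finset V))
    (L : Finset V → Finset ℕ) (σ : Finset V → Finset V → ℕ ≃ ℕ)
    (γ : Finset V → ℕ) : Prop :=
  (∀ e ∈ E, γ e ∈ L e) ∧
  ∀ e ∈ E, ∀ f ∈ E, HIncident e f → σ e f (γ e) ≠ γ f

/-!
All edges can be coloured, so that the conditions on the uncoloured edges hold because there are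
none. Dividing the weights by `ℓ` gives every list total weight one and every colour neighbourhood
weight at most `a = n / ℓ`, which is bounded away from one. In a nibble every edge `e` picks the
colour `c` with probability `θ * p (e, c)`, and keeps it unless it conflicts with another pick. The
colours that survive have their weights boosted to make up for the expected loss, and renormalised.
The neighbourhood of a pair at `v` also loses the share `θ` of its edges that get coloured, and is
spared only the conflicts through `v`, which cost the share `θ * a`; hence `a` decreases by about
`θ * a * (1 - a)`. Each of the sums involved deviates with probability at most `exp (-c * ℓ)`, and
since the weights are at least `exp (-ℓ ^ (1 / 20))`, the number of events that depend on a given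
one is much smaller than `exp (c * ℓ)`; so the local lemma provides a nibble without deviations.
After a number of nibbles that does not depend on `ℓ`, the neighbourhoods have weight at most
`1 / (16 * k)`, and the local lemma colours all remaining edges at once.
-/

open MeasureTheory ProbabilityTheory Finset Real

section LocalLemma

variable {Ω : Type*} [MeasurableSpace Ω] {P : Measure Ω} [IsProbabilityMeasure P]
  {ι : Type*} {A : ι → Set Ω} {Γ : ι → Finset ι}

theorem measureReal_biInter_compl_le_sum_add [DecidableEq ι] (A : ι → Set Ω) (S T : Finset ι) :
    P.real (⋂ j ∈ S, (A j)ᶜ) ≤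
      ∑ j ∈ T, P.real (A j ∩ ⋂ j ∈ S, (A j)ᶜ) + P.real (⋂ j ∈ S ∪ T, (A j)ᶜ) := by
  have hcover : ⋂ j ∈ S, (A j)ᶜ ⊆
      (⋃ j ∈ T, A j ∩ ⋂ j ∈ S, (A j)ᶜ) ∪ ⋂ j ∈ S ∪ T, (A j)ᶜ := by
    intro ω hω
    by_cases h : ∃ j ∈ T, ω ∈ A j
    · obtain ⟨j, hj, hωj⟩ := h
      exact Or.inl (Set.mem_biUnion hj ⟨hωj, hω⟩)
    · push Not at h
      simp only [Set.mem_iInter] at hω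
      exact Or.inr (Set.mem_iInter₂.2 fun j hj => (Finset.mem_union.1 hj).elim (hω j) (h j))
  calc P.real (⋂ j ∈ S, (A j)ᶜ)
      ≤ P.real ((⋃ j ∈ T, A j ∩ ⋂ j ∈ S, (A j)ᶜ) ∪ ⋂ j ∈ S ∪ T, (A j)ᶜ) := measureReal_mono hcover
    _ ≤ _ := (measureReal_union_le _ _).trans <| by
      gcongr
      exact measureReal_biUnion_finset_le T _

theorem measureReal_inter_biInter_compl_le
    (hindep : ∀ i, ∀ S : Finset ι, Disjoint S (Γ i) →
      P.real (A i ∩ ⋂ j ∈ S, (A j)ᶜ) = P.real (A i) * P.real (⋂ j ∈ S, (A j)ᶜ))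
    (hsum : ∀ i, ∑ j ∈ Γ i, P.real (A j) ≤ 1 / 4) (S : Finset ι) (i : ι) :
    P.real (A i ∩ ⋂ j ∈ S, (A j)ᶜ) ≤ 2 * P.real (A i) * P.real (⋂ j ∈ S, (A j)ᶜ) := by
  classical
  induction S using Finset.strongInduction generalizing i with
  | H S ih =>
  set N : Finset ι → Set Ω := fun S => ⋂ j ∈ S, (A j)ᶜ
  have hfar : P.real (A i ∩ N (S \ Γ i)) = P.real (A i) * P.real (N (S \ Γ i)) :=
    hindep i _ sdiff_disjoint
  have hhalf : P.real (N (S \ Γ i)) ≤ 2 * P.real (N S) := by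
    rcases (S ∩ Γ i).eq_empty_or_nonempty with hempty | ⟨j₀, hj₀⟩
    · rw [sdiff_eq_self_of_disjoint (disjoint_iff_inter_eq_empty.2 hempty)]
      linarith [measureReal_nonneg (μ := P) (s := N S)]
    have hlt : S \ Γ i ⊂ S :=
      Finset.sdiff_inter_self_left S (Γ i) ▸ sdiff_ssubset inter_subset_left ⟨j₀, hj₀⟩
    have hnear : ∑ j ∈ S ∩ Γ i, P.real (A j ∩ N (S \ Γ i)) ≤ 1 / 2 * P.real (N (S \ Γ i)) :=
      calc ∑ j ∈ S ∩ Γ i, P.real (A j ∩ N (S \ Γ i))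
          ≤ ∑ j ∈ Γ i, 2 * P.real (A j) * P.real (N (S \ Γ i)) :=
            sum_le_sum_of_subset_of_nonneg inter_subset_right (fun _ _ _ => by positivity)
              |>.trans (sum_le_sum fun j _ => ih _ hlt j)
        _ ≤ 1 / 2 * P.real (N (S \ Γ i)) := by
            rw [← sum_mul, ← mul_sum]
            gcongr
            linarith [hsum i]
    have := measureReal_biInter_compl_le_sum_add (P := P) A (S \ Γ i) (S ∩ Γ i)
    rw [sdiff_union_inter] at this
    linarith
  calc P.real (A i ∩ N S) ≤ P.real (A i ∩ N (S \ Γ i)) :=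
        measureReal_mono (Set.inter_subset_inter_right _
          (Set.biInter_subset_biInter_left (coe_subset.2 sdiff_subset)))
    _ = P.real (A i) * P.real (N (S \ Γ i)) := hfar
    _ ≤ P.real (A i) * (2 * P.real (N S)) := by gcongr
    _ = 2 * P.real (A i) * P.real (N S) := by ring

theorem lovasz_local_lemma [Finite ι] (hΓ : ∀ i, i ∈ Γ i)
    (hindep : ∀ i, ∀ S : Finset ι, Disjoint S (Γ i) →
      P.real (A i ∩ ⋂ j ∈ S, (A j)ᶜ) = P.real (A i) * P.real (⋂ j ∈ S, (A j)ᶜ))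
    (hsum : ∀ i, ∑ j ∈ Γ i, P.real (A j) ≤ 1 / 4) :
    0 < P.real (⋂ i, (A i)ᶜ) := by
  classical
  cases nonempty_fintype ι
  suffices h : ∀ S : Finset ι, 0 < P.real (⋂ j ∈ S, (A j)ᶜ) by simpa using h univ
  intro S
  induction S using Finset.induction with
  | empty => simp
  | insert i S _ ih =>
    have hi : P.real (A i) ≤ 1 / 4 :=
      (single_le_sum (f := fun j => P.real (A j)) (fun _ _ => measureReal_nonneg) (hΓ i)).trans
        (hsum i)
    have hcond := measureReal_inter_biInter_compl_le hindep hsum S i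
    have hunion := measureReal_biInter_compl_le_sum_add (P := P) A S {i}
    rw [sum_singleton, union_comm, ← insert_eq] at hunion
    nlinarith

end LocalLemma

section ProductSpace

variable {ι : Type*} {X : ι → Type*} [∀ i, MeasurableSpace (X i)]

theorem measurable_finset_piecewise [DecidableEq ι] (s : Finset ι) :
    Measurable fun q : (∀ i, X i) × (∀ i, X i) => s.piecewise q.1 q.2 := by
  refine measurable_pi_iff.2 fun i => ?_
  by_cases hi : i ∈ s
  · simpa only [piecewise_eq_of_mem _ _ _ hi] using by fun_prop
  · simpa only [piecewise_eq_of_notMem _ _ _ hi] using by fun_prop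

variable [Fintype ι] {μ : ∀ i, Measure (X i)} [∀ i, IsProbabilityMeasure (μ i)]

theorem measurePreserving_finset_piecewise [DecidableEq ι] (s : Finset ι) :
    MeasurePreserving (fun q : (∀ i, X i) × (∀ i, X i) => s.piecewise q.1 q.2)
      ((Measure.pi μ).prod (Measure.pi μ)) (Measure.pi μ) := by
  refine ⟨measurable_finset_piecewise s, (Measure.pi_eq fun B hB => ?_).symm⟩
  have hpre : (fun q : (∀ i, X i) × (∀ i, X i) => s.piecewise q.1 q.2) ⁻¹' Set.univ.pi B =
      Set.univ.pi (s.piecewise B fun _ => Set.univ) ×ˢ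
        Set.univ.pi (s.piecewise (fun _ => Set.univ) B) := by
    ext q
    simp only [Set.mem_preimage, Set.mem_univ_pi, Set.mem_prod, ← forall_and]
    refine forall_congr' fun i => ?_
    by_cases hi : i ∈ s <;> simp [hi]
  rw [Measure.map_apply (measurable_finset_piecewise s) (MeasurableSet.univ_pi hB), hpre,
    Measure.prod_prod, Measure.pi_pi, Measure.pi_pi, ← prod_mul_distrib]
  refine prod_congr rfl fun i _ => ?_
  by_cases hi : i ∈ s <;> simp [hi]

theorem measureReal_pi_inter_eq_mul {A B : Set (∀ i, X i)} {s t : Finset ι}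
    (hA : MeasurableSet A) (hB : MeasurableSet B)
    (hAs : DependsOn (· ∈ A) (s : Set ι)) (hBt : DependsOn (· ∈ B) (t : Set ι))
    (hst : Disjoint s t) :
    (Measure.pi μ).real (A ∩ B) = (Measure.pi μ).real A * (Measure.pi μ).real B := by
  classical
  have hpre : (fun q : (∀ i, X i) × (∀ i, X i) => s.piecewise q.1 q.2) ⁻¹' (A ∩ B) = A ×ˢ B := by
    ext q
    have h₁ : (s.piecewise q.1 q.2 ∈ A) = (q.1 ∈ A) := hAs fun i hi => piecewise_eq_of_mem _ _ _ hi
    have h₂ : (s.piecewise q.1 q.2 ∈ B) = (q.2 ∈ B) :=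
      hBt fun i hi => piecewise_eq_of_notMem _ _ _ (disjoint_right.1 hst hi)
    simp only [Set.mem_preimage, Set.mem_inter_iff, Set.mem_prod, h₁, h₂]
  rw [← (measurePreserving_finset_piecewise s).measureReal_preimage (hA.inter hB).nullMeasurableSet,
    hpre, measureReal_prod_prod]

theorem exists_mem_measureReal_singleton_ne_zero {Y : Type*} [MeasurableSpace Y] [Finite Y]
    {ν : Measure Y} [IsFiniteMeasure ν] {B : Set Y} (hB : ν.real B ≠ 0) :
    ∃ y ∈ B, ν.real {y} ≠ 0 := by
  contrapose! hB
  rw [measureReal_def, ← Set.biUnion_of_singleton B,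
    (measure_biUnion_null_iff B.to_countable).2 fun y hy =>
      (measureReal_eq_zero_iff (measure_ne_top _ _)).1 (hB y hy),
    ENNReal.toReal_zero]

theorem exists_forall_notMem_of_local {κ : Type*} [Finite κ] [∀ i, Finite (X i)]
    [∀ i, MeasurableSingletonClass (X i)] {A : κ → Set (∀ i, X i)} {T : κ → Finset ι}
    {Γ : κ → Finset κ} (hT : ∀ a, DependsOn (· ∈ A a) (T a : Set ι)) (hΓ : ∀ a, a ∈ Γ a)
    (hdisj : ∀ a, ∀ b ∉ Γ a, Disjoint (T a) (T b))
    (hsum : ∀ a, ∑ b ∈ Γ a, (Measure.pi μ).real (A b) ≤ 1 / 4) :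
    ∃ ω : ∀ i, X i, (∀ a, ω ∉ A a) ∧ ∀ i, (μ i).real {ω i} ≠ 0 := by
  classical
  have hpos : 0 < (Measure.pi μ).real (⋂ a, (A a)ᶜ) := by
    refine lovasz_local_lemma hΓ (fun a S hS => ?_) hsum
    refine measureReal_pi_inter_eq_mul (s := T a) (t := S.biUnion T) .of_discrete .of_discrete
      (hT a) (fun ω ω' h => ?_)
      (disjoint_biUnion_right _ _ _ |>.2 fun b hb => hdisj a b (disjoint_left.1 hS hb))
    simp only [Set.mem_iInter₂, Set.mem_compl_iff]
    refine propext (forall₂_congr fun b hb => not_congr (Eq.to_iff (hT b fun i hi => h i ?_)))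
    exact mem_biUnion.2 ⟨b, hb, hi⟩
  obtain ⟨ω, hωA, hω⟩ := exists_mem_measureReal_singleton_ne_zero hpos.ne'
  refine ⟨ω, by simpa using hωA, fun i hi => hω ?_⟩
  rw [measureReal_def, ← Set.univ_pi_singleton, Measure.pi_pi, ENNReal.toReal_prod]
  exact prod_eq_zero (mem_univ i) hi

end ProductSpace

section FiniteProduct

theorem integral_le_integral_of_finite {Y : Type*} [MeasurableSpace Y] [Finite Y]
    [MeasurableSingletonClass Y] {ν : Measure Y} [IsFiniteMeasure ν] {f g : Y → ℝ}
    (h : ∀ y, f y ≤ g y) : ∫ y, f y ∂ν ≤ ∫ y, g y ∂ν :=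
  integral_mono Integrable.of_finite Integrable.of_finite h

theorem integral_exp_le_of_abs_sub_le {Y : Type*} [MeasurableSpace Y] [Finite Y]
    [MeasurableSingletonClass Y] {ν : Measure Y} [IsProbabilityMeasure ν] {f c : Y → ℝ} {r t : ℝ}
    (hf : ∀ y, |f y - r| ≤ c y) (ht : 0 ≤ t) (htc : ∀ y, t * c y ≤ 1) :
    ∫ y, exp (t * f y) ∂ν ≤ exp (t ^ 2 * ∫ y, c y ^ 2 ∂ν) * exp (t * ∫ y, f y ∂ν) := by
  have hquad : ∀ y, exp (t * (f y - r)) ≤ 1 + t * (f y - r) + t ^ 2 * c y ^ 2 := by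
    intro y
    have habs : |t * (f y - r)| ≤ t * c y := by
      rw [abs_mul, abs_of_nonneg ht]
      exact mul_le_mul_of_nonneg_left (hf y) ht
    have hsq : (t * (f y - r)) ^ 2 ≤ (t * c y) ^ 2 := sq_le_sq' (abs_le.1 habs).1 (abs_le.1 habs).2
    have := (abs_le.1 (abs_exp_sub_one_sub_id_le (habs.trans (htc y)))).2
    linarith [mul_pow t (c y) 2]
  calc ∫ y, exp (t * f y) ∂ν
      = exp (t * r) * ∫ y, exp (t * (f y - r)) ∂ν := by
        rw [← integral_const_mul]
        simp only [← exp_add, mul_sub, add_sub_cancel]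
    _ ≤ exp (t * r) * ∫ y, (1 + t * (f y - r) + t ^ 2 * c y ^ 2) ∂ν := by
        refine mul_le_mul_of_nonneg_left ?_ (exp_pos _).le
        exact integral_le_integral_of_finite hquad
    _ = exp (t * r) * (1 + t * (∫ y, f y ∂ν - r) + t ^ 2 * ∫ y, c y ^ 2 ∂ν) := by
        rw [integral_add, integral_add, integral_const_mul, integral_const_mul, integral_sub]
          <;> first | exact Integrable.of_finite | simp
    _ ≤ exp (t * r) * exp (t * (∫ y, f y ∂ν - r) + t ^ 2 * ∫ y, c y ^ 2 ∂ν) := by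
        gcongr
        linarith [add_one_le_exp (t * (∫ y, f y ∂ν - r) + t ^ 2 * ∫ y, c y ^ 2 ∂ν)]
    _ = exp (t ^ 2 * ∫ y, c y ^ 2 ∂ν) * exp (t * ∫ y, f y ∂ν) := by
        rw [← exp_add, ← exp_add]; ring_nf

variable {ι : Type*} [DecidableEq ι] {X : ι → Type*}

/-- `F` changes by at most `c i x` when coordinate `i` is moved from its resting value `o i`
to `x`. -/
def HasInfluence (F : (∀ i, X i) → ℝ) (o : ∀ i, X i) (c : ∀ i, X i → ℝ) : Prop :=
  ∀ ω i x, |F (Function.update ω i x) - F (Function.update ω i (o i))| ≤ c i x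

theorem HasInfluence.neg {F : (∀ i, X i) → ℝ} {o : ∀ i, X i} {c : ∀ i, X i → ℝ}
    (hF : HasInfluence F o c) : HasInfluence (-F) o c := fun ω i x => by
  simpa only [Pi.neg_apply, neg_sub_neg, abs_sub_comm] using hF ω i x

variable [∀ i, MeasurableSpace (X i)] [∀ i, Finite (X i)] [∀ i, MeasurableSingletonClass (X i)]
  {μ : ∀ i, Measure (X i)} [∀ i, IsProbabilityMeasure (μ i)]

theorem HasInfluence.integral_update {F : (∀ i, X i) → ℝ} {o : ∀ i, X i} {c : ∀ i, X i → ℝ}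
    (hF : HasInfluence F o c) (i : ι) :
    HasInfluence (fun ω => ∫ x, F (Function.update ω i x) ∂μ i) o c := by
  intro ω j y
  rcases eq_or_ne j i with rfl | hji
  · simpa using (abs_nonneg _).trans (hF ω j y)
  · simp only [Function.update_comm hji]
    rw [← integral_sub Integrable.of_finite Integrable.of_finite]
    calc |∫ x, _ ∂μ i| ≤ ∫ x, |_| ∂μ i := abs_integral_le_integral_abs
      _ ≤ ∫ _, c j y ∂μ i :=
        integral_le_integral_of_finite fun x => by
          simpa only [Function.update_comm hji] using hF (Function.update ω i x) j y
      _ = c j y := by simp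

variable [Fintype ι]

theorem integral_pi_eq_integral_piecewise (F : (∀ i, X i) → ℝ) (s : Finset ι) :
    ∫ ω, F ω ∂Measure.pi μ =
      ∫ ω', ∫ ω, F (s.piecewise ω ω') ∂Measure.pi μ ∂Measure.pi μ := by
  have hmp := measurePreserving_finset_piecewise (μ := μ) s
  have hswap := integral_prod_symm (μ := Measure.pi μ) (ν := Measure.pi μ)
    (fun q => F (s.piecewise q.1 q.2)) Integrable.of_finite
  rw [← hswap, ← integral_map hmp.aemeasurable (Integrable.of_finite (f := F)).aestronglyMeasurable,
    hmp.map_eq]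

theorem integral_pi_eq_integral_update (F : (∀ i, X i) → ℝ) (i : ι) :
    ∫ ω, F ω ∂Measure.pi μ = ∫ ω, ∫ x, F (Function.update ω i x) ∂μ i ∂Measure.pi μ := by
  rw [integral_pi_eq_integral_piecewise F {i}]
  simp only [piecewise_singleton]
  exact integral_congr_ae <| .of_forall fun ω =>
    integral_comp_eval (f := fun x => F (Function.update ω i x))
      (Integrable.of_finite (μ := μ i)).aestronglyMeasurable

theorem HasInfluence.integral_exp_le {F : (∀ i, X i) → ℝ} {o : ∀ i, X i} {c : ∀ i, X i → ℝ}
    (hF : HasInfluence F o c) {t : ℝ} (ht : 0 ≤ t) (htc : ∀ i x, t * c i x ≤ 1) :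
    ∫ ω, exp (t * F ω) ∂Measure.pi μ ≤
      exp (t ^ 2 * ∑ i, ∫ x, c i x ^ 2 ∂μ i) * exp (t * ∫ ω, F ω ∂Measure.pi μ) := by
  suffices h : ∀ s : Finset ι, ∀ F : (∀ i, X i) → ℝ, HasInfluence F o c → DependsOn F (s : Set ι) →
      ∫ ω, exp (t * F ω) ∂Measure.pi μ ≤
        exp (t ^ 2 * ∑ i ∈ s, ∫ x, c i x ^ 2 ∂μ i) * exp (t * ∫ ω, F ω ∂Measure.pi μ) by
    exact h univ F hF (by simpa using dependsOn_univ F)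
  intro s
  induction s using Finset.induction with
  | empty =>
    intro F _ hdep
    obtain ⟨ω₀⟩ : Nonempty (∀ i, X i) := ⟨o⟩
    have hconst : ∀ ω, F ω = F ω₀ := fun ω => hdep (by simp)
    simp [hconst]
  | insert i s hi ih =>
    intro F hF hdep
    have hdep' : DependsOn (fun ω => ∫ x, F (Function.update ω i x) ∂μ i) (s : Set ι) := by
      intro ω ω' h
      refine integral_congr_ae (.of_forall fun x => hdep fun j hj => ?_)
      rcases eq_or_ne j i with rfl | hji
      · simp
      · simpa [hji] using h j (by simpa [hji] using hj)
    calc ∫ ω, exp (t * F ω) ∂Measure.pi μ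
        = ∫ ω, ∫ x, exp (t * F (Function.update ω i x)) ∂μ i ∂Measure.pi μ :=
          integral_pi_eq_integral_update _ i
      _ ≤ ∫ ω, exp (t ^ 2 * ∫ x, c i x ^ 2 ∂μ i) *
            exp (t * ∫ x, F (Function.update ω i x) ∂μ i) ∂Measure.pi μ :=
          integral_le_integral_of_finite fun ω =>
            integral_exp_le_of_abs_sub_le (hF ω i) ht (htc i)
      _ ≤ exp (t ^ 2 * ∫ x, c i x ^ 2 ∂μ i) * (exp (t ^ 2 * ∑ j ∈ s, ∫ x, c j x ^ 2 ∂μ j) *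
            exp (t * ∫ ω, ∫ x, F (Function.update ω i x) ∂μ i ∂Measure.pi μ)) := by
          rw [integral_const_mul]
          gcongr
          exact ih _ (hF.integral_update i) hdep'
      _ = exp (t ^ 2 * ∑ j ∈ insert i s, ∫ x, c j x ^ 2 ∂μ j) *
            exp (t * ∫ ω, F ω ∂Measure.pi μ) := by
          rw [sum_insert hi, ← integral_pi_eq_integral_update, mul_add, exp_add, mul_assoc]

theorem measureReal_ge_le_exp_mul_integral {Y : Type*} [MeasurableSpace Y] [Finite Y]
    [MeasurableSingletonClass Y] (ν : Measure Y) [IsFiniteMeasure ν] (f : Y → ℝ) (r : ℝ) {t : ℝ}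
    (ht : 0 ≤ t) : ν.real {y | r ≤ f y} ≤ exp (-t * r) * ∫ y, exp (t * f y) ∂ν :=
  measure_ge_le_exp_mul_mgf r ht Integrable.of_finite

theorem HasInfluence.measureReal_ge_le {F : (∀ i, X i) → ℝ} {o : ∀ i, X i} {c : ∀ i, X i → ℝ}
    (hF : HasInfluence F o c) {b C r : ℝ} (hb : 0 < b) (hC : 0 < C) (hr : 0 ≤ r) (hrb : r ≤ 2 * b)
    (hcC : ∀ i x, c i x ≤ C) (hcb : ∑ i, ∫ x, c i x ∂μ i ≤ b) :
    (Measure.pi μ).real {ω | ∫ ω', F ω' ∂Measure.pi μ + r ≤ F ω} ≤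
      exp (-(r ^ 2 / (4 * b * C))) := by
  have hc : ∀ i x, 0 ≤ c i x := fun i x => (abs_nonneg _).trans (hF o i x)
  set t := r / (2 * b * C)
  have ht : 0 ≤ t := by positivity
  have htC : t * C ≤ 1 := by
    rw [show t * C = r / (2 * b) by simp only [t]; field_simp]
    exact (div_le_one (by positivity)).2 hrb
  have hsq : ∑ i, ∫ x, c i x ^ 2 ∂μ i ≤ C * b :=
    calc ∑ i, ∫ x, c i x ^ 2 ∂μ i ≤ ∑ i, C * ∫ x, c i x ∂μ i := by
          refine sum_le_sum fun i _ => ?_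
          rw [← integral_const_mul]
          exact integral_le_integral_of_finite fun x => by nlinarith [hc i x, hcC i x]
      _ ≤ C * b := by rw [← mul_sum]; gcongr
  calc (Measure.pi μ).real {ω | ∫ ω', F ω' ∂Measure.pi μ + r ≤ F ω}
      ≤ exp (-t * (∫ ω', F ω' ∂Measure.pi μ + r)) * ∫ ω, exp (t * F ω) ∂Measure.pi μ :=
        measureReal_ge_le_exp_mul_integral _ _ _ ht
    _ ≤ exp (-t * (∫ ω', F ω' ∂Measure.pi μ + r)) *
          (exp (t ^ 2 * (C * b)) * exp (t * ∫ ω, F ω ∂Measure.pi μ)) := by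
        have hexp := hF.integral_exp_le (μ := μ) ht fun i x =>
          (mul_le_mul_of_nonneg_left (hcC i x) ht).trans htC
        refine mul_le_mul_of_nonneg_left (hexp.trans ?_) (exp_pos _).le
        gcongr
    _ = exp (-(r ^ 2 / (4 * b * C))) := by
        rw [← exp_add, ← exp_add]
        congr 1
        simp only [t]
        field_simp
        ring

end FiniteProduct

section ConflictWeight

variable {ι : Type*} [Fintype ι] {X : ι → Type*}

open Classical in
/-- The total weight of the coordinates of `ω` that stand in the relation `R` to another
coordinate. -/
noncomputable def conflictWeight (c : ∀ i, X i → ℝ) (R : ∀ i, X i → ∀ j, X j → Prop)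
    (ω : ∀ i, X i) : ℝ :=
  ∑ i, if ∃ j ≠ i, R i (ω i) j (ω j) then c i (ω i) else 0

open Classical in
/-- The decoupled version of `conflictWeight`: only coordinates of `ω` in `s` in conflict with
coordinates of `ω'` outside `s` are counted. -/
noncomputable def crossWeight (c : ∀ i, X i → ℝ) (R : ∀ i, X i → ∀ j, X j → Prop)
    (s : Finset ι) (ω ω' : ∀ i, X i) : ℝ :=
  ∑ i, if i ∈ s ∧ ∃ j ∉ s, R i (ω i) j (ω' j) then c i (ω i) else 0

open Classical in
/-- The expected total weight of the random values that stand in the relation `R` to the value `y`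
of coordinate `j`. -/
noncomputable def expectedConflict [∀ i, MeasurableSpace (X i)] (μ : ∀ i, Measure (X i))
    (c : ∀ i, X i → ℝ) (R : ∀ i, X i → ∀ j, X j → Prop) (j : ι) (y : X j) : ℝ :=
  ∑ i, ∫ x, (if R i x j y then c i x else 0) ∂μ i

variable {c : ∀ i, X i → ℝ} {R : ∀ i, X i → ∀ j, X j → Prop}

theorem card_filter_mem_notMem [DecidableEq ι] {i j : ι} (hij : j ≠ i) :
    (2 : ℝ) ^ Fintype.card ι = 4 * #{s : Finset ι | i ∈ s ∧ j ∉ s} := by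
  have hIcc : ({s : Finset ι | i ∈ s ∧ j ∉ s} : Finset (Finset ι)) = Icc {i} {j}ᶜ := by
    ext s
    simp [subset_compl_singleton]
  have hle : ({i} : Finset ι) ⊆ {j}ᶜ := by simpa using hij
  have hcard : 2 ≤ Fintype.card ι := by
    simpa [card_pair hij] using card_le_univ ({j, i} : Finset ι)
  obtain ⟨m, hm⟩ := Nat.exists_eq_add_of_le' hcard
  rw [hIcc, card_Icc_finset hle, card_compl, card_singleton, card_singleton, hm]
  norm_num [pow_add, mul_comm]

theorem two_pow_card_mul_conflictWeight_le (hc : ∀ i x, 0 ≤ c i x) (ω : ∀ i, X i) :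
    2 ^ Fintype.card ι * conflictWeight c R ω ≤ 4 * ∑ s, crossWeight c R s ω ω := by
  classical
  simp only [conflictWeight, crossWeight]
  rw [sum_comm, mul_sum, mul_sum]
  refine sum_le_sum fun i _ => ?_
  split_ifs with h
  · obtain ⟨j, hji, hR⟩ := h
    rw [card_filter_mem_notMem hji, mul_assoc, ← nsmul_eq_mul, ← sum_const, sum_filter]
    gcongr with s
    split_ifs with h₁ h₂ h₂
    · exact le_rfl
    · exact absurd ⟨h₁.1, j, h₁.2, hR⟩ h₂
    · exact hc _ _
    · exact le_rfl
  · rw [mul_zero]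
    exact mul_nonneg (by norm_num) (sum_nonneg fun s _ => by split_ifs <;> simp [hc])

theorem exp_conflictWeight_le (hc : ∀ i x, 0 ≤ c i x) {t : ℝ} (ht : 0 ≤ t) (ω : ∀ i, X i) :
    exp (t * conflictWeight c R ω) ≤
      ∑ s, (2 ^ Fintype.card ι)⁻¹ * exp (4 * t * crossWeight c R s ω ω) := by
  classical
  have hpow : (0 : ℝ) < 2 ^ Fintype.card ι := by positivity
  calc exp (t * conflictWeight c R ω)
      ≤ exp (∑ s : Finset ι, (2 ^ Fintype.card ι)⁻¹ • (4 * t * crossWeight c R s ω ω)) := by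
        simp only [smul_eq_mul, ← mul_sum]
        rw [exp_le_exp, inv_mul_eq_div, le_div_iff₀ hpow]
        linarith [mul_le_mul_of_nonneg_left (two_pow_card_mul_conflictWeight_le (R := R) hc ω) ht]
    _ ≤ ∑ s : Finset ι, (2 ^ Fintype.card ι)⁻¹ • exp (4 * t * crossWeight c R s ω ω) :=
        convexOn_exp.map_sum_le (fun _ _ => by positivity) (by simp) (fun _ _ => Set.mem_univ _)

variable [∀ i, MeasurableSpace (X i)] [∀ i, Finite (X i)] [∀ i, MeasurableSingletonClass (X i)]
  {μ : ∀ i, Measure (X i)} [∀ i, IsProbabilityMeasure (μ i)]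

theorem integral_exp_sum_le {b : ∀ i, X i → ℝ} (hb₀ : ∀ i x, 0 ≤ b i x) (hb₁ : ∀ i x, b i x ≤ 1) :
    ∫ ω, exp (∑ i, b i (ω i)) ∂Measure.pi μ ≤ exp (2 * ∑ i, ∫ x, b i x ∂μ i) := by
  have hlin : ∀ i x, exp (b i x) ≤ 1 + 2 * b i x := by
    intro i x
    have hx := abs_exp_sub_one_sub_id_le (abs_le.2 ⟨by linarith [hb₀ i x], hb₁ i x⟩)
    nlinarith [(abs_le.1 hx).2, hb₀ i x, hb₁ i x]
  simp only [exp_sum]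
  rw [integral_fintype_prod_eq_prod (fun i x => exp (b i x)), mul_sum, exp_sum]
  refine prod_le_prod (fun i _ => integral_nonneg fun x => (exp_pos _).le) fun i _ => ?_
  calc ∫ x, exp (b i x) ∂μ i ≤ ∫ x, (1 + 2 * b i x) ∂μ i := integral_le_integral_of_finite (hlin i)
    _ = 1 + 2 * ∫ x, b i x ∂μ i := by
        rw [integral_add Integrable.of_finite Integrable.of_finite, integral_const_mul]
        simp
    _ ≤ exp (2 * ∫ x, b i x ∂μ i) := by linarith [add_one_le_exp (2 * ∫ x, b i x ∂μ i)]

theorem integral_exp_crossWeight_right_le (hc : ∀ i x, 0 ≤ c i x) {t : ℝ} (ht : 0 ≤ t)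
    (htc : ∀ i x, t * c i x ≤ 1) (s : Finset ι) (ω' : ∀ i, X i) :
    ∫ ω, exp (t * crossWeight c R s ω ω') ∂Measure.pi μ ≤
      exp (∑ j, 2 * t * expectedConflict μ c R j (ω' j)) := by
  classical
  have hsplit : ∀ i x, (if i ∈ s ∧ ∃ j ∉ s, R i x j (ω' j) then t * c i x else 0) ≤
      ∑ j, t * if R i x j (ω' j) then c i x else 0 := by
    intro i x
    have hnonneg : ∀ j, 0 ≤ t * if R i x j (ω' j) then c i x else 0 := fun j =>
      mul_nonneg ht (by split_ifs <;> simp [hc])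
    split_ifs with h
    · obtain ⟨j, -, hR⟩ := h.2
      simpa [hR] using single_le_sum (fun j _ => hnonneg j) (mem_univ j)
    · exact sum_nonneg fun j _ => hnonneg j
  simp only [crossWeight, mul_sum, mul_ite, mul_zero]
  refine (integral_exp_sum_le (b := fun i x => if i ∈ s ∧ ∃ j ∉ s, R i x j (ω' j) then t * c i x
    else 0) (fun i x => ?_) fun i x => ?_).trans (exp_le_exp.2 ?_)
  · split_ifs <;> [exact mul_nonneg ht (hc i x); exact le_rfl]
  · split_ifs <;> [exact htc i x; exact zero_le_one]
  calc 2 * ∑ i, ∫ x, (if i ∈ s ∧ ∃ j ∉ s, R i x j (ω' j) then t * c i x else 0) ∂μ i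
      ≤ 2 * ∑ i, ∫ x, ∑ j, t * (if R i x j (ω' j) then c i x else 0) ∂μ i := by
        refine mul_le_mul_of_nonneg_left (sum_le_sum fun i _ => ?_) zero_le_two
        exact integral_le_integral_of_finite (hsplit i)
    _ = ∑ j, 2 * t * expectedConflict μ c R j (ω' j) := by
        simp only [integral_finsetSum _ fun _ _ => Integrable.of_finite, integral_const_mul,
          expectedConflict, mul_sum]
        rw [sum_comm]
        simp only [mul_assoc]

theorem integral_exp_crossWeight_le (hc : ∀ i x, 0 ≤ c i x) {t M : ℝ} (ht : 0 ≤ t)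
    (htc : ∀ i x, t * c i x ≤ 1) (htR : ∀ j y, 2 * t * expectedConflict μ c R j y ≤ 1)
    (hM : ∑ j, ∫ y, expectedConflict μ c R j y ∂μ j ≤ M) (s : Finset ι) :
    ∫ ω, exp (t * crossWeight c R s ω ω) ∂Measure.pi μ ≤ exp (4 * t * M) := by
  classical
  have hpw : ∀ ω ω' : ∀ i, X i, crossWeight c R s (s.piecewise ω ω') (s.piecewise ω ω') =
      crossWeight c R s ω ω' := by
    intro ω ω'
    refine sum_congr rfl fun i _ => ?_
    by_cases hi : i ∈ s
    · have hex : (∃ j ∉ s, R i (ω i) j (s.piecewise ω ω' j)) ↔ ∃ j ∉ s, R i (ω i) j (ω' j) :=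
        exists_congr fun j => and_congr_right fun hj => by rw [piecewise_eq_of_notMem _ _ _ hj]
      simp only [hi, true_and, piecewise_eq_of_mem, hex]
    · simp only [hi, false_and, if_false]
  have hnonneg : ∀ j y, 0 ≤ expectedConflict μ c R j y := fun j y =>
    sum_nonneg fun i _ => integral_nonneg fun x => by
      simp only [Pi.zero_apply]
      split_ifs <;> simp [hc]
  rw [integral_pi_eq_integral_piecewise _ s]
  simp only [hpw]
  calc ∫ ω', ∫ ω, exp (t * crossWeight c R s ω ω') ∂Measure.pi μ ∂Measure.pi μ
      ≤ ∫ ω', exp (∑ j, 2 * t * expectedConflict μ c R j (ω' j)) ∂Measure.pi μ :=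
        integral_le_integral_of_finite (integral_exp_crossWeight_right_le hc ht htc s)
    _ ≤ exp (2 * ∑ j, ∫ y, 2 * t * expectedConflict μ c R j y ∂μ j) :=
        integral_exp_sum_le (fun j y => mul_nonneg (by positivity) (hnonneg j y)) htR
    _ ≤ exp (4 * t * M) := by
        simp only [integral_const_mul, ← mul_sum]
        rw [exp_le_exp]
        nlinarith

theorem measureReal_conflictWeight_ge_le (hc : ∀ i x, 0 ≤ c i x) {t M r : ℝ} (ht : 0 ≤ t)
    (htc : ∀ i x, 4 * t * c i x ≤ 1)
    (htR : ∀ j y, 8 * t * expectedConflict μ c R j y ≤ 1)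
    (hM : ∑ j, ∫ y, expectedConflict μ c R j y ∂μ j ≤ M) :
    (Measure.pi μ).real {ω | 16 * M + r ≤ conflictWeight c R ω} ≤ exp (-(t * r)) := by
  have hmgf : ∫ ω, exp (t * conflictWeight c R ω) ∂Measure.pi μ ≤ exp (16 * t * M) :=
    calc ∫ ω, exp (t * conflictWeight c R ω) ∂Measure.pi μ
        ≤ ∫ ω, ∑ s, (2 ^ Fintype.card ι)⁻¹ * exp (4 * t * crossWeight c R s ω ω) ∂Measure.pi μ :=
          integral_le_integral_of_finite (exp_conflictWeight_le hc ht)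
      _ = ∑ s, (2 ^ Fintype.card ι)⁻¹ * ∫ ω, exp (4 * t * crossWeight c R s ω ω) ∂Measure.pi μ := by
          simp only [integral_finsetSum _ fun _ _ => Integrable.of_finite, integral_const_mul]
      _ ≤ ∑ s : Finset ι, (2 ^ Fintype.card ι)⁻¹ * exp (16 * t * M) := by
          gcongr with s
          refine (integral_exp_crossWeight_le hc (by positivity) htc (fun j y => ?_) hM s).trans_eq
            (by ring_nf)
          linarith [htR j y]
      _ = exp (16 * t * M) := by simp
  calc (Measure.pi μ).real {ω | 16 * M + r ≤ conflictWeight c R ω}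
      ≤ exp (-t * (16 * M + r)) * ∫ ω, exp (t * conflictWeight c R ω) ∂Measure.pi μ :=
        measureReal_ge_le_exp_mul_integral _ _ _ ht
    _ ≤ exp (-t * (16 * M + r)) * exp (16 * t * M) := by gcongr
    _ = exp (-(t * r)) := by rw [← exp_add]; ring_nf

end ConflictWeight

section RandomPicks

open scoped Classical

variable {A C : Type*}

/-- A partial assignment of colours to edges is encoded as `ω : A → Option C`; it picks the pair
`(e, c)` if it assigns the colour `c` to the edge `e`. -/
def Picked (ω : A → Option C) (x : A × C) : Prop := ω x.1 = some x.2

theorem picked_update_some_iff {ω : A → Option C} {e : A} {c : C} {l : A × C} :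
    Picked (Function.update ω e (some c)) l ↔
      Picked (Function.update ω e none) l ∨ l = (e, c) := by
  obtain ⟨f, d⟩ := l
  rcases eq_or_ne f e with rfl | h
  · simp [Picked, eq_comm]
  · simp [Picked, h]

/-- The total weight of those pairs in `J` none of whose blockers, listed by `B`, is picked. -/
noncomputable def unblockedWeight (w : A × C → ℝ) (J : Finset (A × C))
    (B : A × C → Finset (A × C)) (ω : A → Option C) : ℝ :=
  ∑ y ∈ J, if ∀ l ∈ B y, ¬Picked ω l then w y else 0

/-- The total weight of those pairs in `J` that the pick `o` at the edge `e` blocks. -/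
noncomputable def blockedBy (w : A × C → ℝ) (J : Finset (A × C)) (B : A × C → Finset (A × C))
    (e : A) (o : Option C) : ℝ :=
  o.elim 0 fun c => ∑ y ∈ J with (e, c) ∈ B y, w y

variable {w : A × C → ℝ} {J : Finset (A × C)} {B : A × C → Finset (A × C)}

theorem hasInfluence_unblockedWeight (hw : ∀ y, 0 ≤ w y) :
    HasInfluence (unblockedWeight w J B) (fun _ => none) (blockedBy w J B) := by
  intro ω e o
  cases o with
  | none => simp [blockedBy]
  | some c =>
    rw [unblockedWeight, unblockedWeight, ← sum_sub_distrib]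
    refine (abs_sum_le_sum_abs _ _).trans ?_
    simp only [blockedBy, Option.elim_some, sum_filter, picked_update_some_iff, not_or]
    refine sum_le_sum fun y _ => ?_
    by_cases hy : (e, c) ∈ B y
    · rw [if_pos hy]
      split_ifs <;> simp [abs_of_nonneg, hw]
    · have hne : ∀ l ∈ B y, l ≠ (e, c) := fun l hl h => hy (h ▸ hl)
      rw [if_neg hy]
      simp +contextual [hne]

theorem blockedBy_le {D : ℝ} (hD : 0 ≤ D) (hwD : ∀ l, ∑ y ∈ J with l ∈ B y, w y ≤ D) (e : A)
    (o : Option C) : blockedBy w J B e o ≤ D := by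
  cases o with
  | none => exact hD
  | some c => exact hwD (e, c)

variable [MeasurableSpace (Option C)] [MeasurableSingletonClass (Option C)]

theorem exists_isProbabilityMeasure_option [Fintype C] {r : C → ℝ} (hr : ∀ c, 0 ≤ r c)
    (hsum : ∑ c, r c ≤ 1) :
    ∃ ν : Measure (Option C), IsProbabilityMeasure ν ∧ ∀ c, ν.real {some c} = r c := by
  set f : Option C → NNReal := fun o => o.elim (1 - ∑ c, r c).toNNReal fun c => (r c).toNNReal
  have hf : ∑ o, (f o : ENNReal) = 1 := by
    rw [← ENNReal.ofNNReal_finsetSum, ENNReal.coe_eq_one, ← NNReal.coe_eq_one, Fintype.sum_option]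
    push_cast
    simp [f, hr, hsum]
  refine ⟨(PMF.ofFintype (fun o => (f o : ENNReal)) hf).toMeasure, inferInstance, fun c => ?_⟩
  rw [measureReal_def, PMF.toMeasure_apply_singleton _ _ (measurableSet_singleton _)]
  simp [f, hr]

variable {μ : A → Measure (Option C)} [∀ e, IsProbabilityMeasure (μ e)] {q : A × C → ℝ}

theorem integral_option_of_none_eq_zero [Fintype C]
    (hμ : ∀ x : A × C, (μ x.1).real {some x.2} = q x) (e : A) {g : Option C → ℝ} (hg : g none = 0) :
    ∫ o, g o ∂μ e = ∑ c, q (e, c) * g (some c) := by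
  rw [integral_fintype Integrable.of_finite, Fintype.sum_option, hg, smul_zero, zero_add]
  exact sum_congr rfl fun c _ => by rw [hμ (e, c), smul_eq_mul]

variable [Fintype A]

theorem measureReal_picked (hμ : ∀ x : A × C, (μ x.1).real {some x.2} = q x) (x : A × C) :
    (Measure.pi μ).real {ω | Picked ω x} = q x := by
  rw [← hμ x]
  exact (measurePreserving_eval μ x.1).measureReal_preimage
    (measurableSet_singleton (some x.2)).nullMeasurableSet

variable [Finite C]

theorem measureReal_picked_inter (hμ : ∀ x : A × C, (μ x.1).real {some x.2} = q x)
    {x y : A × C} (hxy : x.1 ≠ y.1) :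
    (Measure.pi μ).real {ω | Picked ω x ∧ Picked ω y} = q x * q y := by
  have hdep : ∀ z : A × C, DependsOn (· ∈ {ω : A → Option C | Picked ω z})
      (({z.1} : Finset A) : Set A) := fun z ω ω' h => by
    simp only [Set.mem_ofPred_eq, Picked, h z.1 (by simp)]
  rw [← measureReal_picked hμ x, ← measureReal_picked hμ y]
  exact measureReal_pi_inter_eq_mul .of_discrete .of_discrete (hdep x) (hdep y)
    (disjoint_singleton.2 hxy)

theorem one_sub_sum_le_measureReal_not_picked (hμ : ∀ x : A × C, (μ x.1).real {some x.2} = q x)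
    (B : Finset (A × C)) :
    1 - ∑ l ∈ B, q l ≤ (Measure.pi μ).real {ω | ∀ l ∈ B, ¬Picked ω l} := by
  have hcompl : {ω : A → Option C | ∀ l ∈ B, ¬Picked ω l} = (⋃ l ∈ B, {ω | Picked ω l})ᶜ := by
    ext ω; simp
  have hunion := measureReal_biUnion_finset_le (μ := Measure.pi μ) B fun l => {ω | Picked ω l}
  simp only [measureReal_picked hμ] at hunion
  rw [hcompl, probReal_compl_eq_one_sub .of_discrete]
  linarith

theorem measureReal_not_picked_le_exp (hμ : ∀ x : A × C, (μ x.1).real {some x.2} = q x)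
    (B : Finset (A × C)) :
    (Measure.pi μ).real {ω | ∀ l ∈ B, ¬Picked ω l} ≤ exp (-∑ l ∈ B, q l) := by
  have hfib : ∀ e, (μ e).real {o | ∀ l ∈ B, l.1 = e → o ≠ some l.2} ≤
      exp (-∑ l ∈ B with l.1 = e, q l) := by
    intro e
    have hcompl : {o : Option C | ∀ l ∈ B, l.1 = e → o ≠ some l.2} =
        (⋃ l ∈ ({l ∈ B | l.1 = e} : Finset (A × C)), {some l.2})ᶜ := by
      ext o; simp
    rw [hcompl, probReal_compl_eq_one_sub .of_discrete, measureReal_biUnion_finset]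
    · rw [sum_congr rfl fun l hl => (by rw [← (mem_filter.1 hl).2, hμ] :
        (μ e).real {some l.2} = q l)]
      exact one_sub_le_exp_neg _
    · intro l hl l' hl' hne
      refine Set.disjoint_singleton.2 fun h => hne ?_
      rw [mem_coe, mem_filter] at hl hl'
      exact Prod.ext (hl.2.trans hl'.2.symm) (Option.some.inj h)
    · exact fun _ _ => measurableSet_singleton _
  have hpi : {ω : A → Option C | ∀ l ∈ B, ¬Picked ω l} =
      Set.univ.pi fun e => {o | ∀ l ∈ B, l.1 = e → o ≠ some l.2} := by
    ext ω
    simp only [Set.mem_ofPred_eq, Set.mem_univ_pi]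
    exact ⟨fun h e l hl hle => hle ▸ h l hl, fun h l hl => h l.1 l hl rfl⟩
  rw [hpi, measureReal_def, Measure.pi_pi, ENNReal.toReal_prod]
  calc ∏ e, (μ e).real {o | ∀ l ∈ B, l.1 = e → o ≠ some l.2}
      ≤ ∏ e, exp (-∑ l ∈ B with l.1 = e, q l) :=
        prod_le_prod (fun _ _ => measureReal_nonneg) fun e _ => hfib e
    _ = exp (-∑ l ∈ B, q l) := by
        rw [← exp_sum, sum_neg_distrib, ← sum_fiberwise B Prod.fst q]

theorem integral_unblockedWeight :
    ∫ ω, unblockedWeight w J B ω ∂Measure.pi μ =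
      ∑ y ∈ J, w y * (Measure.pi μ).real {ω | ∀ l ∈ B y, ¬Picked ω l} := by
  simp only [unblockedWeight]
  rw [integral_finsetSum _ fun _ _ => Integrable.of_finite]
  refine sum_congr rfl fun y _ => ?_
  rw [mul_comm, ← smul_eq_mul, ← integral_indicator_const _ .of_discrete]
  exact integral_congr_ae (.of_forall fun ω => by simp [Set.indicator_apply])

theorem sum_integral_blockedBy (hμ : ∀ x : A × C, (μ x.1).real {some x.2} = q x) :
    ∑ e, ∫ o, blockedBy w J B e o ∂μ e = ∑ y ∈ J, w y * ∑ l ∈ B y, q l := by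
  cases nonempty_fintype C
  calc ∑ e, ∫ o, blockedBy w J B e o ∂μ e = ∑ l, q l * ∑ y ∈ J with l ∈ B y, w y := by
        rw [Fintype.sum_prod_type]
        exact sum_congr rfl fun e _ => integral_option_of_none_eq_zero hμ e rfl
    _ = ∑ y ∈ J, w y * ∑ l ∈ B y, q l := by
        simp only [sum_filter, mul_sum]
        rw [sum_comm]
        refine sum_congr rfl fun y _ => ?_
        simp only [mul_ite, mul_zero, ← sum_filter, filter_mem_eq_inter, univ_inter]
        exact sum_congr rfl fun l _ => mul_comm _ _

variable {b D r : ℝ}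

theorem measureReal_unblockedWeight_ge_le (hμ : ∀ x : A × C, (μ x.1).real {some x.2} = q x)
    (hw : ∀ y, 0 ≤ w y) (hb : 0 < b) (hD : 0 < D) (hr : 0 ≤ r) (hrb : r ≤ 2 * b)
    (hwD : ∀ l, ∑ y ∈ J with l ∈ B y, w y ≤ D) (hwb : ∑ y ∈ J, w y * ∑ l ∈ B y, q l ≤ b) :
    (Measure.pi μ).real {ω | ∫ ω', unblockedWeight w J B ω' ∂Measure.pi μ + r ≤
      unblockedWeight w J B ω} ≤ exp (-(r ^ 2 / (4 * b * D))) :=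
  (hasInfluence_unblockedWeight hw).measureReal_ge_le hb hD hr hrb (blockedBy_le hD.le hwD)
    ((sum_integral_blockedBy hμ).trans_le hwb)

theorem measureReal_unblockedWeight_le_le (hμ : ∀ x : A × C, (μ x.1).real {some x.2} = q x)
    (hw : ∀ y, 0 ≤ w y) (hb : 0 < b) (hD : 0 < D) (hr : 0 ≤ r) (hrb : r ≤ 2 * b)
    (hwD : ∀ l, ∑ y ∈ J with l ∈ B y, w y ≤ D) (hwb : ∑ y ∈ J, w y * ∑ l ∈ B y, q l ≤ b) :
    (Measure.pi μ).real {ω | unblockedWeight w J B ω ≤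
      ∫ ω', unblockedWeight w J B ω' ∂Measure.pi μ - r} ≤ exp (-(r ^ 2 / (4 * b * D))) := by
  have htail := (hasInfluence_unblockedWeight (J := J) (B := B) hw).neg.measureReal_ge_le (μ := μ)
    hb hD hr hrb (blockedBy_le hD.le hwD) ((sum_integral_blockedBy hμ).trans_le hwb)
  simpa only [Pi.neg_apply, integral_neg, neg_add_le_iff_le_add, ← sub_eq_add_neg, le_sub_comm]
    using htail

end RandomPicks

section NibbleState

open scoped Classical

variable {V A C : Type*}

/-- The correspondence cover of a linear hypergraph with edges `e : A`, vertex sets `vert e` of at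
most `k` elements and colours `C`: the pairs (edge, colour) are the vertices of `G`, and adjacent
pairs block each other. -/
structure IsLinearCover (vert : A → Finset V) (G : SimpleGraph (A × C)) (k : ℕ) : Prop where
  card_le : ∀ e, #(vert e) ≤ k
  subsingleton_inter : ∀ e f, e ≠ f → ((vert e : Set V) ∩ vert f).Subsingleton
  fst_ne : ∀ x y, G.Adj x y → x.1 ≠ y.1
  not_disjoint : ∀ x y, G.Adj x y → ¬Disjoint (vert x.1) (vert y.1)
  eq_of_adj : ∀ x y z, G.Adj x y → G.Adj x z → y.1 = z.1 → y = z

theorem IsLinearCover.mono {vert : A → Finset V} {G G' : SimpleGraph (A × C)} {k : ℕ}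
    (hG : IsLinearCover vert G k) (hle : G' ≤ G) : IsLinearCover vert G' k where
  card_le := hG.card_le
  subsingleton_inter := hG.subsingleton_inter
  fst_ne x y h := hG.fst_ne x y (hle h)
  not_disjoint x y h := hG.not_disjoint x y (hle h)
  eq_of_adj x y z hy hz := hG.eq_of_adj x y z (hle hy) (hle hz)

theorem IsLinearCover.card_filter_fst_eq_le_one {vert : A → Finset V} {G : SimpleGraph (A × C)}
    {k : ℕ} (hG : IsLinearCover vert G k) {x : A × C} {J : Finset (A × C)}
    (hJ : ∀ y ∈ J, G.Adj x y) (e : A) : #{y ∈ J | y.1 = e} ≤ 1 := by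
  refine card_le_one.2 fun y hy z hz => ?_
  rw [mem_filter] at hy hz
  exact hG.eq_of_adj x y z (hJ y hy.1) (hJ z hz.1) (hy.2.trans hz.2.symm)

variable [Fintype A] [Fintype C]

/-- The neighbours of the pair `x` whose edge contains `v`; for `v ∈ vert x.1` this is the colour
neighbourhood of `x` at `v`. -/
noncomputable def branch (vert : A → Finset V) (G : SimpleGraph (A × C)) (x : A × C) (v : V) :
    Finset (A × C) :=
  {y | G.Adj x y ∧ v ∈ vert y.1}

/-- The pairs whose being picked prevents `y` from staying in a list, except for the neighbours of
`y` through `v`. -/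
noncomputable def blockers (vert : A → Finset V) (G : SimpleGraph (A × C)) (v : V) (y : A × C) :
    Finset (A × C) :=
  {l | l.1 = y.1 ∨ (G.Adj y l ∧ v ∉ vert l.1)}

/-- The weights compensate, to first order in `θ`, for the chance that a neighbour of `x` is picked
when every pair `y` is picked with probability `θ * p y`. -/
noncomputable def boosted (G : SimpleGraph (A × C)) (p : A × C → ℝ) (θ : ℝ) (x : A × C) : ℝ :=
  p x * (1 + θ * ∑ y ∈ G.neighborFinset x, p y)

/-- The invariant of the nibble: the edges in `F` are still uncoloured, the weights `p` of the
colours left in their lists sum to one over each list, lie between `τ` and `m`, and every pair has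
total weight at most `a` in its neighbourhood at each vertex. -/
structure NibbleState (vert : A → Finset V) (G : SimpleGraph (A × C)) (F : Finset A)
    (p : A × C → ℝ) (a m τ : ℝ) : Prop where
  a_nonneg : 0 ≤ a
  a_le_one : a ≤ 1
  m_pos : 0 < m
  τ_pos : 0 < τ
  τ_le_one : τ ≤ 1
  nonneg : ∀ x, 0 ≤ p x
  le_m : ∀ x, p x ≤ m
  τ_le : ∀ x, p x ≠ 0 → τ ≤ p x
  fst_mem : ∀ x, p x ≠ 0 → x.1 ∈ F
  sum_eq_one : ∀ e ∈ F, ∑ c, p (e, c) = 1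
  ne_zero_of_adj : ∀ x y, G.Adj x y → p x ≠ 0
  sum_branch_le : ∀ x, ∀ v ∈ vert x.1, ∑ y ∈ branch vert G x v, p y ≤ a

variable {vert : A → Finset V} {G : SimpleGraph (A × C)} {k : ℕ} {F : Finset A} {p : A × C → ℝ}
  {a m τ θ : ℝ}

@[simp]
theorem mem_branch {x y : A × C} {v : V} :
    y ∈ branch vert G x v ↔ G.Adj x y ∧ v ∈ vert y.1 := by
  simp [branch]

@[simp]
theorem mem_blockers {y l : A × C} {v : V} :
    l ∈ blockers vert G v y ↔ l.1 = y.1 ∨ (G.Adj y l ∧ v ∉ vert l.1) := by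
  simp [blockers]

namespace IsLinearCover

theorem sum_neighborFinset_le (hG : IsLinearCover vert G k) {f : A × C → ℝ} (hf : ∀ y, 0 ≤ f y)
    (x : A × C) :
    ∑ y ∈ G.neighborFinset x, f y ≤ ∑ v ∈ vert x.1, ∑ y ∈ branch vert G x v, f y := by
  have hbranch : ∀ v, ∑ y ∈ branch vert G x v, f y =
      ∑ y ∈ G.neighborFinset x, if v ∈ vert y.1 then f y else 0 := fun v => by
    rw [← sum_filter]
    exact sum_congr (by ext y; simp) fun _ _ => rfl
  simp only [hbranch]
  rw [sum_comm]
  refine sum_le_sum fun y hy => ?_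
  obtain ⟨v, hvx, hvy⟩ :=
    Finset.not_disjoint_iff.1 (hG.not_disjoint x y ((G.mem_neighborFinset x y).1 hy))
  calc f y = if v ∈ vert y.1 then f y else 0 := (if_pos hvy).symm
    _ ≤ _ := single_le_sum (f := fun v => if v ∈ vert y.1 then f y else 0)
        (fun u _ => by split_ifs <;> simp [hf]) hvx

theorem card_filter_mem_blockers_le (hG : IsLinearCover vert G k) (x : A × C) (v : V)
    (l : A × C) : #{y ∈ branch vert G x v | l ∈ blockers vert G v y} ≤ k + 1 := by
  set J := branch vert G x v
  have hJ : ∀ y ∈ J, G.Adj x y ∧ v ∈ vert y.1 := fun y => mem_branch.1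
  have hthrough : ∀ u ∈ vert l.1, #{y ∈ J | u ∈ vert y.1 ∧ v ∉ vert l.1} ≤ 1 := by
    refine fun u hu => card_le_one.2 fun y hy z hz => ?_
    rw [mem_filter] at hy hz
    by_contra hyz
    have hfst : y.1 ≠ z.1 := fun h => hyz (hG.eq_of_adj x y z (hJ y hy.1).1 (hJ z hz.1).1 h)
    have huv : u = v := hG.subsingleton_inter _ _ hfst ⟨hy.2.1, hz.2.1⟩
      ⟨(hJ y hy.1).2, (hJ z hz.1).2⟩
    exact hy.2.2 (huv ▸ hu)
  have hcover : {y ∈ J | l ∈ blockers vert G v y} ⊆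
      {y ∈ J | y.1 = l.1} ∪ (vert l.1).biUnion fun u => {y ∈ J | u ∈ vert y.1 ∧ v ∉ vert l.1} := by
    intro y hy
    obtain ⟨hyJ, hfst | ⟨hadj, hv⟩⟩ := (mem_filter.1 hy).imp_right mem_blockers.1
    · exact mem_union_left _ (mem_filter.2 ⟨hyJ, hfst.symm⟩)
    · obtain ⟨u, huy, hul⟩ := Finset.not_disjoint_iff.1 (hG.not_disjoint y l hadj)
      exact mem_union_right _ (mem_biUnion.2 ⟨u, hul, mem_filter.2 ⟨hyJ, huy, hv⟩⟩)
  calc #{y ∈ J | l ∈ blockers vert G v y}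
      ≤ #{y ∈ J | y.1 = l.1} + #(vert l.1) * 1 :=
        (card_le_card hcover).trans <| (card_union_le _ _).trans <|
          Nat.add_le_add_left (card_biUnion_le_card_mul _ _ _ hthrough) _
    _ ≤ 1 + k := by
        have := hG.card_filter_fst_eq_le_one (J := J) (fun y hy => (hJ y hy).1) l.1
        have := hG.card_le l.1
        omega
    _ = k + 1 := add_comm _ _

end IsLinearCover

namespace NibbleState

theorem sum_neighborFinset_le (hp : NibbleState vert G F p a m τ) (hG : IsLinearCover vert G k)
    (x : A × C) : ∑ y ∈ G.neighborFinset x, p y ≤ k * a :=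
  calc ∑ y ∈ G.neighborFinset x, p y
      ≤ ∑ v ∈ vert x.1, ∑ y ∈ branch vert G x v, p y := hG.sum_neighborFinset_le hp.nonneg x
    _ ≤ ∑ _v ∈ vert x.1, a := sum_le_sum (hp.sum_branch_le x)
    _ ≤ k * a := by
        rw [sum_const, nsmul_eq_mul]
        exact mul_le_mul_of_nonneg_right (mod_cast hG.card_le x.1) hp.a_nonneg

theorem sum_le_one (hp : NibbleState vert G F p a m τ) (e : A) : ∑ c, p (e, c) ≤ 1 := by
  by_cases he : e ∈ F
  · exact (hp.sum_eq_one e he).le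
  · rw [sum_eq_zero fun c _ => by_contra fun h => he (hp.fst_mem (e, c) h)]
    exact zero_le_one

theorem sum_neighborFinset_nonneg (hp : NibbleState vert G F p a m τ) (x : A × C) :
    0 ≤ ∑ y ∈ G.neighborFinset x, p y :=
  sum_nonneg fun y _ => hp.nonneg y

theorem mul_sum_neighborFinset_le (hp : NibbleState vert G F p a m τ)
    (hG : IsLinearCover vert G k) (hθ : 0 ≤ θ) (x : A × C) :
    θ * ∑ y ∈ G.neighborFinset x, p y ≤ θ * k :=
  mul_le_mul_of_nonneg_left ((hp.sum_neighborFinset_le hG x).trans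
    (mul_le_of_le_one_right k.cast_nonneg hp.a_le_one)) hθ

theorem le_boosted (hp : NibbleState vert G F p a m τ) (hθ : 0 ≤ θ) (x : A × C) :
    p x ≤ boosted G p θ x :=
  le_mul_of_one_le_right (hp.nonneg x)
    (le_add_of_nonneg_right (mul_nonneg hθ (hp.sum_neighborFinset_nonneg x)))

theorem boosted_nonneg (hp : NibbleState vert G F p a m τ) (hθ : 0 ≤ θ) (x : A × C) :
    0 ≤ boosted G p θ x :=
  (hp.nonneg x).trans (hp.le_boosted hθ x)

theorem boosted_le (hp : NibbleState vert G F p a m τ) (hG : IsLinearCover vert G k) (hθ : 0 ≤ θ)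
    (hθk : θ * (k + 1) ≤ 1 / 2) (x : A × C) : boosted G p θ x ≤ 2 * p x := by
  have hle := hp.mul_sum_neighborFinset_le hG hθ x
  rw [mul_comm 2]
  exact mul_le_mul_of_nonneg_left (by linarith) (hp.nonneg x)

end NibbleState

end NibbleState

section FailureProbabilities

open scoped Classical

variable {V A C : Type*} [Fintype A] [Fintype C] {vert : A → Finset V} {G : SimpleGraph (A × C)}
  {k : ℕ} {F : Finset A} {p : A × C → ℝ} {a m τ θ : ℝ}

theorem IsLinearCover.sum_blockers_add_sum_branch (hG : IsLinearCover vert G k) (f : A × C → ℝ)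
    (y : A × C) (v : V) :
    ∑ l ∈ blockers vert G v y, f l + ∑ l ∈ branch vert G y v, f l =
      ∑ c, f (y.1, c) + ∑ l ∈ G.neighborFinset y, f l := by
  have hblock : blockers vert G v y =
      {y.1} ×ˢ univ ∪ {l ∈ G.neighborFinset y | v ∉ vert l.1} := by
    ext l
    simp [Prod.ext_iff, eq_comm]
  have hbranch : branch vert G y v = {l ∈ G.neighborFinset y | v ∈ vert l.1} := by
    ext l
    simp
  have hdisj : Disjoint ({y.1} ×ˢ (univ : Finset C)) {l ∈ G.neighborFinset y | v ∉ vert l.1} := by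
    refine Finset.disjoint_left.2 fun l hl hl' => ?_
    rw [mem_filter, SimpleGraph.mem_neighborFinset] at hl'
    exact hG.fst_ne y l hl'.1 (mem_singleton.1 (mem_product.1 hl).1).symm
  rw [hblock, hbranch, sum_union hdisj, sum_product, sum_singleton, add_assoc,
    add_comm (∑ l ∈ _ with _, _), sum_filter_add_sum_filter_not]

theorem NibbleState.sum_blockers_le (hp : NibbleState vert G F p a m τ)
    (hG : IsLinearCover vert G k) (y : A × C) (v : V) :
    ∑ l ∈ blockers vert G v y, p l ≤ k + 1 := by
  have hsplit := hG.sum_blockers_add_sum_branch p y v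
  have hbranch : 0 ≤ ∑ l ∈ branch vert G y v, p l := sum_nonneg fun l _ => hp.nonneg l
  have hmul : (k : ℝ) * a ≤ k := mul_le_of_le_one_right k.cast_nonneg hp.a_le_one
  linarith [hp.sum_le_one y.1, hp.sum_neighborFinset_le hG y]

theorem NibbleState.sum_boosted_le_of_card_le (hp : NibbleState vert G F p a m τ)
    (hG : IsLinearCover vert G k) (hθ : 0 ≤ θ) (hθk : θ * (k + 1) ≤ 1 / 2)
    {J : Finset (A × C)} {N : ℕ} (hJ : #J ≤ N) : ∑ y ∈ J, boosted G p θ y ≤ 2 * m * N :=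
  calc ∑ y ∈ J, boosted G p θ y ≤ #J • (2 * m) := sum_le_card_nsmul _ _ _ fun y _ =>
        (hp.boosted_le hG hθ hθk y).trans (by linarith [hp.le_m y])
    _ ≤ 2 * m * N := by
        rw [nsmul_eq_mul, mul_comm]
        have := hp.m_pos
        gcongr

theorem NibbleState.sum_boosted_mul_le (hp : NibbleState vert G F p a m τ)
    (hG : IsLinearCover vert G k) (hθ : 0 ≤ θ) (hθk : θ * (k + 1) ≤ 1 / 2)
    {J : Finset (A × C)} (hJ : ∑ y ∈ J, p y ≤ 1) {g : A × C → ℝ} {B : ℝ} (hB : 0 ≤ B)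
    (hg : ∀ y, g y ≤ B) : ∑ y ∈ J, boosted G p θ y * g y ≤ 2 * B :=
  calc ∑ y ∈ J, boosted G p θ y * g y ≤ ∑ y ∈ J, 2 * p y * B := sum_le_sum fun y _ =>
        (mul_le_mul_of_nonneg_left (hg y) (hp.boosted_nonneg hθ y)).trans
          (mul_le_mul_of_nonneg_right (hp.boosted_le hG hθ hθk y) hB)
    _ ≤ 2 * B := by
        rw [← sum_mul, ← mul_sum]
        nlinarith

theorem NibbleState.sum_branch_filter_fst_le (hp : NibbleState vert G F p a m τ)
    (hG : IsLinearCover vert G k) (hθ : 0 ≤ θ) (hθk : θ * (k + 1) ≤ 1 / 2) (x : A × C) (v : V)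
    (e : A) : ∑ y ∈ branch vert G x v with y.1 = e, boosted G p θ y ≤ 2 * m := by
  simpa using hp.sum_boosted_le_of_card_le hG hθ hθk
    (hG.card_filter_fst_eq_le_one (fun y hy => (mem_branch.1 hy).1) e)

/-- The part of the list of the edge `e` that stays available, in `boosted` weights. -/
noncomputable def listWeight (G : SimpleGraph (A × C)) (p : A × C → ℝ) (θ : ℝ) (e : A) :
    (A → Option C) → ℝ :=
  unblockedWeight (boosted G p θ) ({e} ×ˢ univ) fun x => G.neighborFinset x

/-- The part of the neighbourhood of `x` at `v` with no picked blocker, in `boosted` weights. -/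
noncomputable def branchWeight (vert : A → Finset V) (G : SimpleGraph (A × C)) (p : A × C → ℝ)
    (θ : ℝ) (x : A × C) (v : V) : (A → Option C) → ℝ :=
  unblockedWeight (boosted G p θ) (branch vert G x v) (blockers vert G v)

/-- The `boosted` weight of the neighbours of `x` through `v` on the edge `f`, charged to any pick
at that edge. -/
noncomputable def branchCharge (vert : A → Finset V) (G : SimpleGraph (A × C)) (p : A × C → ℝ)
    (θ : ℝ) (x : A × C) (v : V) (f : A) (o : Option C) : ℝ :=
  o.elim 0 fun _ => ∑ y ∈ branch vert G x v with y.1 = f, boosted G p θ y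

/-- The picks `o` at the edge `i` and `o'` at the edge `j` block each other. -/
def Clash (G : SimpleGraph (A × C)) (i : A) (o : Option C) (j : A) (o' : Option C) : Prop :=
  ∃ c ∈ o, ∃ c' ∈ o', G.Adj (i, c) (j, c')

/-- The part of the neighbourhood of `x` at `v` on edges whose picked colour is blocked by another
pick, in `boosted` weights. -/
noncomputable def clashWeight (vert : A → Finset V) (G : SimpleGraph (A × C)) (p : A × C → ℝ)
    (θ : ℝ) (x : A × C) (v : V) : (A → Option C) → ℝ :=
  conflictWeight (branchCharge vert G p θ x v) (Clash G)

/-- The bound on the failure probability of a single concentration estimate in the nibble. -/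
noncomputable def nibbleTail (θ : ℝ) (k : ℕ) (m : ℝ) : ℝ :=
  exp (-(θ ^ 3 / (16 * (k + 1) ^ 2 * m)))

theorem exp_neg_eq_nibbleTail (hθ : 0 < θ) (hm : 0 < m) :
    exp (-((θ ^ 2) ^ 2 / (4 * (2 * (θ * (k + 1))) * (2 * m * (k + 1 : ℕ))))) =
      nibbleTail θ k m := by
  rw [nibbleTail]
  congr 2
  push_cast
  field_simp
  ring

variable [MeasurableSpace (Option C)] [MeasurableSingletonClass (Option C)]
  {μ : A → Measure (Option C)} [∀ e, IsProbabilityMeasure (μ e)]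

theorem NibbleState.one_sub_le_integral_listWeight (hp : NibbleState vert G F p a m τ)
    (hG : IsLinearCover vert G k) (hθ : 0 < θ)
    (hμ : ∀ x : A × C, (μ x.1).real {some x.2} = θ * p x) {e : A} (he : e ∈ F) :
    1 - (θ * k) ^ 2 ≤ ∫ ω, listWeight G p θ e ω ∂Measure.pi μ := by
  have hterm : ∀ c, (1 - (θ * k) ^ 2) * p (e, c) ≤ boosted G p θ (e, c) *
      (Measure.pi μ).real {ω | ∀ l ∈ G.neighborFinset (e, c), ¬Picked ω l} := by
    intro c
    set K := ∑ y ∈ G.neighborFinset (e, c), p y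
    have hK : 0 ≤ θ * K := mul_nonneg hθ.le (hp.sum_neighborFinset_nonneg _)
    have hKk : θ * K ≤ θ * k := hp.mul_sum_neighborFinset_le hG hθ.le _
    calc (1 - (θ * k) ^ 2) * p (e, c) ≤ (1 - (θ * K) ^ 2) * p (e, c) := by
          have := hp.nonneg (e, c)
          gcongr
      _ = boosted G p θ (e, c) * (1 - ∑ y ∈ G.neighborFinset (e, c), θ * p y) := by
          rw [boosted, ← mul_sum]; ring
      _ ≤ _ := mul_le_mul_of_nonneg_left (one_sub_sum_le_measureReal_not_picked hμ _)
          (hp.boosted_nonneg hθ.le _)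
  calc 1 - (θ * k) ^ 2 = ∑ c, (1 - (θ * k) ^ 2) * p (e, c) := by
        rw [← mul_sum, hp.sum_eq_one e he, mul_one]
    _ ≤ _ := sum_le_sum fun c _ => hterm c
    _ = ∫ ω, listWeight G p θ e ω ∂Measure.pi μ := by
        simp only [listWeight]
        rw [integral_unblockedWeight, sum_product, sum_singleton]

theorem NibbleState.boosted_mul_measureReal_blockers_le (hp : NibbleState vert G F p a m τ)
    (hG : IsLinearCover vert G k) (hθ : 0 ≤ θ)
    (hμ : ∀ x : A × C, (μ x.1).real {some x.2} = θ * p x) {y : A × C} {v : V}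
    (hy : y.1 ∈ F) (hv : v ∈ vert y.1) :
    boosted G p θ y * (Measure.pi μ).real {ω | ∀ l ∈ blockers vert G v y, ¬Picked ω l} ≤
      p y * exp (-(θ * (1 - a))) := by
  set K := ∑ l ∈ G.neighborFinset y, p l
  set S := ∑ l ∈ blockers vert G v y, p l
  have hS : 1 + K ≤ S + a := by
    have := hG.sum_blockers_add_sum_branch p y v
    rw [hp.sum_eq_one y.1 hy] at this
    linarith [hp.sum_branch_le y v hv]
  have hpick : (Measure.pi μ).real {ω | ∀ l ∈ blockers vert G v y, ¬Picked ω l} ≤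
      exp (-(θ * S)) := by
    simpa only [← mul_sum] using measureReal_not_picked_le_exp hμ (blockers vert G v y)
  calc boosted G p θ y * (Measure.pi μ).real {ω | ∀ l ∈ blockers vert G v y, ¬Picked ω l}
      ≤ (p y * exp (θ * K)) * exp (-(θ * S)) := by
        refine mul_le_mul ?_ hpick measureReal_nonneg (mul_nonneg (hp.nonneg y) (exp_pos _).le)
        exact mul_le_mul_of_nonneg_left (by linarith [add_one_le_exp (θ * K)]) (hp.nonneg y)
    _ ≤ p y * exp (-(θ * (1 - a))) := by
        rw [mul_assoc, ← exp_add]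
        refine mul_le_mul_of_nonneg_left (exp_le_exp.2 ?_) (hp.nonneg y)
        nlinarith

theorem NibbleState.integral_branchWeight_le (hp : NibbleState vert G F p a m τ)
    (hG : IsLinearCover vert G k) (hθ : 0 ≤ θ) (hθ₁ : θ ≤ 1)
    (hμ : ∀ x : A × C, (μ x.1).real {some x.2} = θ * p x) {x : A × C} {v : V}
    (hv : v ∈ vert x.1) :
    ∫ ω, branchWeight vert G p θ x v ω ∂Measure.pi μ ≤ a - θ * a * (1 - a) + θ ^ 2 := by
  have ha₀ := hp.a_nonneg
  have ha₁ := hp.a_le_one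
  have hexp : exp (-(θ * (1 - a))) ≤ 1 - θ * (1 - a) + θ ^ 2 := by
    have h₀ : 0 ≤ θ * (1 - a) := mul_nonneg hθ (by linarith)
    have h₁ : θ * (1 - a) ≤ θ := mul_le_of_le_one_right hθ (by linarith)
    have := (abs_le.1 (abs_exp_sub_one_sub_id_le (x := -(θ * (1 - a)))
      (by rw [abs_neg, abs_of_nonneg h₀]; linarith))).2
    nlinarith
  calc ∫ ω, branchWeight vert G p θ x v ω ∂Measure.pi μ
      ≤ ∑ y ∈ branch vert G x v, p y * exp (-(θ * (1 - a))) := by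
        simp only [branchWeight]
        rw [integral_unblockedWeight]
        refine sum_le_sum fun y hy => ?_
        obtain ⟨hxy, hvy⟩ := mem_branch.1 hy
        exact hp.boosted_mul_measureReal_blockers_le hG hθ hμ
          (hp.fst_mem y (hp.ne_zero_of_adj y x hxy.symm)) hvy
    _ ≤ a * (1 - θ * (1 - a) + θ ^ 2) := by
        rw [← sum_mul]
        exact mul_le_mul (hp.sum_branch_le x v hv) hexp (exp_pos _).le ha₀
    _ ≤ a - θ * a * (1 - a) + θ ^ 2 := by nlinarith [sq_nonneg θ]

theorem NibbleState.measureReal_listWeight_le_le (hp : NibbleState vert G F p a m τ)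
    (hG : IsLinearCover vert G k) (hθ : 0 < θ) (hθk : θ * (k + 1) ≤ 1 / 2)
    (hμ : ∀ x : A × C, (μ x.1).real {some x.2} = θ * p x) {e : A} (he : e ∈ F) :
    (Measure.pi μ).real {ω | listWeight G p θ e ω ≤ 1 - (θ * (k + 1)) ^ 2} ≤
      nibbleTail θ k m := by
  have hm := hp.m_pos
  have hcard : ∀ l, #{y ∈ {e} ×ˢ (univ : Finset C) | l ∈ G.neighborFinset y} ≤ 1 := by
    intro l
    have hJ : {y ∈ {e} ×ˢ (univ : Finset C) | l ∈ G.neighborFinset y} =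
        {y ∈ G.neighborFinset l | y.1 = e} := by
      ext y
      simp [Prod.ext_iff, G.adj_comm, and_comm, eq_comm]
    rw [hJ]
    exact hG.card_filter_fst_eq_le_one (fun y hy => (G.mem_neighborFinset l y).1 hy) e
  have hmean := hp.one_sub_le_integral_listWeight hG hθ hμ he
  refine (measureReal_mono fun ω hω => ?_).trans ((measureReal_unblockedWeight_le_le
    (J := {e} ×ˢ univ) (B := fun x => G.neighborFinset x) (b := 2 * (θ * (k + 1)))
    (D := 2 * m * (k + 1 : ℕ)) (r := θ ^ 2) hμ (hp.boosted_nonneg hθ.le) (by positivity)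
    (by positivity) (by positivity) ?_ (fun l => ?_) ?_).trans_eq ?_)
  · have hω' : listWeight G p θ e ω ≤ 1 - (θ * (k + 1)) ^ 2 := hω
    have hle : listWeight G p θ e ω ≤ ∫ ω', listWeight G p θ e ω' ∂Measure.pi μ - θ ^ 2 := by
      nlinarith [mul_nonneg (sq_nonneg θ) k.cast_nonneg]
    exact hle
  · nlinarith
  · exact hp.sum_boosted_le_of_card_le hG hθ.le hθk ((hcard l).trans (by omega))
  · refine hp.sum_boosted_mul_le hG hθ.le hθk ?_ (by positivity) fun y => ?_
    · simpa only [sum_product, sum_singleton] using hp.sum_le_one e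
    · rw [← mul_sum]
      linarith [hp.mul_sum_neighborFinset_le hG hθ.le y]
  · exact exp_neg_eq_nibbleTail hθ hm

theorem NibbleState.measureReal_branchWeight_ge_le (hp : NibbleState vert G F p a m τ)
    (hG : IsLinearCover vert G k) (hθ : 0 < θ) (hθk : θ * (k + 1) ≤ 1 / 2)
    (hμ : ∀ x : A × C, (μ x.1).real {some x.2} = θ * p x) {x : A × C} {v : V}
    (hv : v ∈ vert x.1) :
    (Measure.pi μ).real {ω | a - θ * a * (1 - a) + 2 * θ ^ 2 ≤ branchWeight vert G p θ x v ω} ≤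
      nibbleTail θ k m := by
  have hm := hp.m_pos
  have hθ₁ : θ ≤ 1 := by nlinarith
  have hmean := hp.integral_branchWeight_le hG hθ.le hθ₁ hμ hv
  refine (measureReal_mono fun ω hω => ?_).trans ((measureReal_unblockedWeight_ge_le
    (J := branch vert G x v) (B := blockers vert G v) (b := 2 * (θ * (k + 1)))
    (D := 2 * m * (k + 1 : ℕ)) (r := θ ^ 2) hμ (hp.boosted_nonneg hθ.le) (by positivity)
    (by positivity) (by positivity) ?_ (fun l => ?_) ?_).trans_eq ?_)
  · have hω' : a - θ * a * (1 - a) + 2 * θ ^ 2 ≤ branchWeight vert G p θ x v ω := hω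
    have hle : ∫ ω', branchWeight vert G p θ x v ω' ∂Measure.pi μ + θ ^ 2 ≤
        branchWeight vert G p θ x v ω := by linarith
    exact hle
  · nlinarith
  · exact hp.sum_boosted_le_of_card_le hG hθ.le hθk (hG.card_filter_mem_blockers_le x v l)
  · refine hp.sum_boosted_mul_le hG hθ.le hθk ((hp.sum_branch_le x v hv).trans hp.a_le_one)
      (by positivity) fun y => ?_
    rw [← mul_sum]
    exact mul_le_mul_of_nonneg_left (hp.sum_blockers_le hG y v) hθ.le
  · exact exp_neg_eq_nibbleTail hθ hm

theorem expectedConflict_branchCharge_some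
    (hμ : ∀ x : A × C, (μ x.1).real {some x.2} = θ * p x) (x z : A × C) (v : V) :
    expectedConflict μ (branchCharge vert G p θ x v) (Clash G) z.1 (some z.2) =
      ∑ l ∈ G.neighborFinset z, θ * p l *
        ∑ y ∈ branch vert G x v with y.1 = l.1, boosted G p θ y := by
  have hi : ∀ i, ∫ o, (if Clash G i o z.1 (some z.2) then branchCharge vert G p θ x v i o else 0)
      ∂μ i = ∑ c, if G.Adj z (i, c) then
        θ * p (i, c) * ∑ y ∈ branch vert G x v with y.1 = i, boosted G p θ y else 0 := by
    intro i
    rw [integral_option_of_none_eq_zero hμ i (by simp [Clash])]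
    simp [Clash, branchCharge, G.adj_comm z]
  simp only [expectedConflict, hi]
  rw [← Fintype.sum_prod_type' fun i c => if G.Adj z (i, c) then
    θ * p (i, c) * ∑ y ∈ branch vert G x v with y.1 = i, boosted G p θ y else 0, ← sum_filter]
  exact sum_congr (by ext l; simp) fun _ _ => rfl

theorem NibbleState.expectedConflict_branchCharge_le (hp : NibbleState vert G F p a m τ)
    (hG : IsLinearCover vert G k) (hθ : 0 < θ) (hθk : θ * (k + 1) ≤ 1 / 2)
    (hμ : ∀ x : A × C, (μ x.1).real {some x.2} = θ * p x) (x : A × C) (v : V) (j : A)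
    (o : Option C) : expectedConflict μ (branchCharge vert G p θ x v) (Clash G) j o ≤ m := by
  have hm := hp.m_pos
  cases o with
  | none => simp [expectedConflict, Clash, hm.le]
  | some c =>
    calc expectedConflict μ (branchCharge vert G p θ x v) (Clash G) j (some c)
        ≤ ∑ l ∈ G.neighborFinset (j, c), θ * p l * (2 * m) := by
          rw [expectedConflict_branchCharge_some hμ x (j, c) v]
          gcongr with l
          · exact mul_nonneg hθ.le (hp.nonneg l)
          · exact hp.sum_branch_filter_fst_le hG hθ.le hθk x v l.1
      _ = 2 * m * (θ * ∑ l ∈ G.neighborFinset (j, c), p l) := by rw [← sum_mul, ← mul_sum]; ring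
      _ ≤ 2 * m * (1 / 2) := by
          gcongr
          linarith [hp.mul_sum_neighborFinset_le hG hθ.le (j, c)]
      _ = m := by ring

theorem integral_expectedConflict_branchCharge
    (hμ : ∀ x : A × C, (μ x.1).real {some x.2} = θ * p x) (x : A × C) (v : V) (j : A) :
    ∫ o, expectedConflict μ (branchCharge vert G p θ x v) (Clash G) j o ∂μ j =
      ∑ c, θ * p (j, c) * ∑ l ∈ G.neighborFinset (j, c), θ * p l *
        ∑ y ∈ branch vert G x v with y.1 = l.1, boosted G p θ y := by
  rw [integral_option_of_none_eq_zero hμ j (by simp [expectedConflict, Clash])]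
  exact sum_congr rfl fun c _ => by
    rw [expectedConflict_branchCharge_some (G := G) hμ x (j, c) v]

theorem NibbleState.sum_integral_expectedConflict_branchCharge_le
    (hp : NibbleState vert G F p a m τ) (hG : IsLinearCover vert G k) (hθ : 0 < θ)
    (hθk : θ * (k + 1) ≤ 1 / 2) (hμ : ∀ x : A × C, (μ x.1).real {some x.2} = θ * p x)
    {x : A × C} {v : V} (hv : v ∈ vert x.1) :
    ∑ j, ∫ o, expectedConflict μ (branchCharge vert G p θ x v) (Clash G) j o ∂μ j ≤
      2 * θ ^ 2 * k := by
  set W : A → ℝ := fun i => ∑ y ∈ branch vert G x v with y.1 = i, boosted G p θ y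
  have hW : ∀ i, 0 ≤ W i := fun i => sum_nonneg fun y _ => hp.boosted_nonneg hθ.le y
  have hterm : ∀ l : A × C, θ * p l * W l.1 * (θ * ∑ z ∈ G.neighborFinset l, p z) ≤
      θ * p l * W l.1 * (θ * k) := fun l => by
    have := hp.nonneg l
    have := hW l.1
    exact mul_le_mul_of_nonneg_left (hp.mul_sum_neighborFinset_le hG hθ.le l) (by positivity)
  calc ∑ j, ∫ o, expectedConflict μ (branchCharge vert G p θ x v) (Clash G) j o ∂μ j
      = ∑ z : A × C, θ * p z * ∑ l ∈ G.neighborFinset z, θ * p l * W l.1 := by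
        rw [Fintype.sum_prod_type]
        exact sum_congr rfl fun j _ => integral_expectedConflict_branchCharge hμ x v j
    _ = ∑ l : A × C, θ * p l * W l.1 * (θ * ∑ z ∈ G.neighborFinset l, p z) := by
        simp only [mul_sum]
        rw [sum_comm' (t' := univ) (s' := fun l => G.neighborFinset l) (by simp [G.adj_comm])]
        exact sum_congr rfl fun l _ => sum_congr rfl fun z _ => by ring
    _ ≤ ∑ l : A × C, θ * p l * W l.1 * (θ * k) := sum_le_sum fun l _ => hterm l
    _ = θ ^ 2 * k * ∑ i, W i * ∑ c, p (i, c) := by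
        rw [Fintype.sum_prod_type, mul_sum]
        refine sum_congr rfl fun i _ => ?_
        rw [mul_sum, mul_sum]
        exact sum_congr rfl fun c _ => by ring
    _ ≤ θ ^ 2 * k * ∑ i, W i := by
        gcongr with i
        exact mul_le_of_le_one_right (hW i) (hp.sum_le_one i)
    _ = θ ^ 2 * k * ∑ y ∈ branch vert G x v, boosted G p θ y := by
        rw [← sum_fiberwise (branch vert G x v) Prod.fst]
    _ ≤ θ ^ 2 * k * (2 * 1) := by
        gcongr
        simpa using hp.sum_boosted_mul_le hG hθ.le hθk
          ((hp.sum_branch_le x v hv).trans hp.a_le_one) (g := fun _ => 1) zero_le_one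
          fun _ => le_rfl
    _ = 2 * θ ^ 2 * k := by ring

theorem NibbleState.measureReal_clashWeight_ge_le (hp : NibbleState vert G F p a m τ)
    (hG : IsLinearCover vert G k) (hθ : 0 < θ) (hθk : θ * (k + 1) ≤ 1 / 2)
    (hμ : ∀ x : A × C, (μ x.1).real {some x.2} = θ * p x) {x : A × C} {v : V}
    (hv : v ∈ vert x.1) :
    (Measure.pi μ).real {ω | (32 * k + 1) * θ ^ 2 ≤ clashWeight vert G p θ x v ω} ≤
      nibbleTail θ k m := by
  have hm := hp.m_pos
  have hcharge : ∀ i o, 0 ≤ branchCharge vert G p θ x v i o ∧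
      branchCharge vert G p θ x v i o ≤ 2 * m := by
    rintro i (_ | c)
    · exact ⟨le_rfl, by simp [branchCharge, hm.le]⟩
    · exact ⟨sum_nonneg fun y _ => hp.boosted_nonneg hθ.le y,
        hp.sum_branch_filter_fst_le hG hθ.le hθk x v i⟩
  have hexpected := hp.expectedConflict_branchCharge_le hG hθ hθk hμ x v
  refine (measureReal_mono fun ω hω => ?_).trans ((measureReal_conflictWeight_ge_le (r := θ ^ 2)
    (t := 1 / (8 * m)) (fun i o => (hcharge i o).1) (by positivity) (fun i o => ?_)
    (fun j o => ?_)
    (hp.sum_integral_expectedConflict_branchCharge_le hG hθ hθk hμ hv)).trans ?_)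
  · have hω' : (32 * k + 1) * θ ^ 2 ≤ clashWeight vert G p θ x v ω := hω
    have hle : 16 * (2 * θ ^ 2 * k) + θ ^ 2 ≤ clashWeight vert G p θ x v ω := by linarith
    exact hle
  · have := (hcharge i o).2
    rw [mul_one_div, div_mul_eq_mul_div, div_le_one (by positivity)]
    linarith
  · have := hexpected j o
    rw [mul_one_div, div_mul_eq_mul_div, div_le_one (by positivity)]
    linarith
  · rw [nibbleTail, exp_le_exp, neg_le_neg_iff, one_div_mul_eq_div, div_le_div_iff₀
      (by positivity) (by positivity)]
    have hθk' : θ ≤ 2 * (k + 1) ^ 2 := by nlinarith [hθ, sq_nonneg (k : ℝ)]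
    calc θ ^ 3 * (8 * m) = 8 * θ ^ 2 * m * θ := by ring
      _ ≤ 8 * θ ^ 2 * m * (2 * (k + 1) ^ 2) := by gcongr
      _ = θ ^ 2 * (16 * (k + 1) ^ 2 * m) := by ring

end FailureProbabilities

section NextState

open scoped Classical

variable {V A C : Type*} {G : SimpleGraph (A × C)} {F : Finset A} {p : A × C → ℝ}
  {ω : A → Option C}

/-- The subgraph of `G` on the pairs of positive weight. -/
def liveGraph (G : SimpleGraph (A × C)) (p : A × C → ℝ) : SimpleGraph (A × C) where
  Adj x y := G.Adj x y ∧ p x ≠ 0 ∧ p y ≠ 0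
  symm := ⟨fun _ _ h => ⟨h.1.symm, h.2.2, h.2.1⟩⟩
  loopless := ⟨fun _ h => G.irrefl h.1⟩

theorem liveGraph_le : liveGraph G p ≤ G := fun _ _ h => h.1

/-- The pair `x` is not blocked by any pick. -/
def Survives (G : SimpleGraph (A × C)) (ω : A → Option C) (x : A × C) : Prop :=
  ∀ y, G.Adj x y → ¬Picked ω y

/-- The edges of `F` that stay uncoloured when every pick that is not blocked by another pick is
made permanent. -/
noncomputable def nextEdges (G : SimpleGraph (A × C)) (F : Finset A) (ω : A → Option C) :
    Finset A :=
  {e ∈ F | ∀ c, Picked ω (e, c) → ¬Survives G ω (e, c)}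

theorem mem_nextEdges {e : A} :
    e ∈ nextEdges G F ω ↔ e ∈ F ∧ ∀ c, Picked ω (e, c) → ¬Survives G ω (e, c) := by
  rw [nextEdges, mem_filter]

/-- The existence of a colouring of the edges in `F` from the pairs of positive weight. -/
def HasColouring (G : SimpleGraph (A × C)) (F : Finset A) (p : A × C → ℝ) : Prop :=
  ∃ S : Set (A × C), G.IsIndepSet S ∧ (∀ x ∈ S, p x ≠ 0) ∧ ∀ e ∈ F, ∃ c, (e, c) ∈ S

theorem HasColouring.of_nextEdges {p' : A × C → ℝ}
    (h : HasColouring (liveGraph G p') (nextEdges G F ω) p')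
    (hp' : ∀ x, p' x ≠ 0 → p x ≠ 0 ∧ Survives G ω x) (hpick : ∀ x, Picked ω x → p x ≠ 0) :
    HasColouring G F p := by
  obtain ⟨S, hindep, hlive, hcol⟩ := h
  refine ⟨S ∪ {x | Picked ω x ∧ Survives G ω x}, ?_, ?_, fun e he => ?_⟩
  · rintro x (hx | hx) y (hy | hy) hne hadj
    · exact hindep hx hy hne ⟨hadj, hlive x hx, hlive y hy⟩
    · exact (hp' x (hlive x hx)).2 y hadj hy.1
    · exact (hp' y (hlive y hy)).2 x hadj.symm hx.1
    · exact hx.2 y hadj hy.1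
  · rintro x (hx | hx)
    · exact (hp' x (hlive x hx)).1
    · exact hpick x hx.1
  · by_cases hnext : e ∈ nextEdges G F ω
    · exact (hcol e hnext).imp fun c => Or.inl
    · rw [mem_nextEdges] at hnext
      push Not at hnext
      exact (hnext he).imp fun c => Or.inr

theorem exists_clash_of_mem_nextEdges {y l : A × C} (hadj : ∀ x y, G.Adj x y → x.1 ≠ y.1)
    (hy : y.1 ∈ nextEdges G F ω) (hl : Picked ω l) (hly : l.1 = y.1) :
    ∃ j ≠ y.1, Clash G y.1 (ω y.1) j (ω j) := by
  have hblocked : ¬Survives G ω (y.1, l.2) := (mem_nextEdges.1 hy).2 l.2 (hly ▸ hl)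
  simp only [Survives, not_forall, not_not] at hblocked
  obtain ⟨z, hz, hzpick⟩ := hblocked
  exact ⟨z.1, (hadj _ _ hz).symm, l.2, hly ▸ hl, z.2, hzpick, hz⟩

variable [Fintype A] [Fintype C] {vert : A → Finset V} {k : ℕ} {a m τ θ : ℝ}

/-- The weights after one nibble: the `boosted` weights of the colours left in the lists of the
uncoloured edges, normalised. -/
noncomputable def nextWeight (G : SimpleGraph (A × C)) (F : Finset A) (p : A × C → ℝ) (θ : ℝ)
    (ω : A → Option C) (x : A × C) : ℝ :=
  if x.1 ∈ nextEdges G F ω ∧ Survives G ω x then boosted G p θ x / listWeight G p θ x.1 ω else 0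

/-- One of the concentration estimates that the nibble relies on fails at the edge `e`. -/
def NibbleFails (vert : A → Finset V) (G : SimpleGraph (A × C)) (k : ℕ) (F : Finset A)
    (p : A × C → ℝ) (a θ : ℝ) (e : A) (ω : A → Option C) : Prop :=
  (e ∈ F ∧ listWeight G p θ e ω ≤ 1 - (θ * (k + 1)) ^ 2) ∨
    ∃ c, p (e, c) ≠ 0 ∧ ∃ v ∈ vert e,
      a - θ * a * (1 - a) + 2 * θ ^ 2 ≤ branchWeight vert G p θ (e, c) v ω ∨
        (32 * k + 1) * θ ^ 2 ≤ clashWeight vert G p θ (e, c) v ω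

theorem nextWeight_ne_zero {x : A × C} (h : nextWeight G F p θ ω x ≠ 0) :
    x.1 ∈ nextEdges G F ω ∧ Survives G ω x ∧ p x ≠ 0 := by
  rw [nextWeight] at h
  split_ifs at h with hx
  · exact ⟨hx.1, hx.2, fun hpx => h (by rw [boosted, hpx, zero_mul, zero_div])⟩
  · exact absurd rfl h

theorem listWeight_eq (e : A) :
    listWeight G p θ e ω = ∑ c, if Survives G ω (e, c) then boosted G p θ (e, c) else 0 := by
  rw [listWeight, unblockedWeight, sum_product, sum_singleton]
  refine sum_congr rfl fun c _ => ?_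
  congr 1
  simp [Survives]

theorem clashWeight_eq (x : A × C) (v : V) :
    clashWeight vert G p θ x v ω = ∑ y ∈ branch vert G x v,
      if ∃ j ≠ y.1, Clash G y.1 (ω y.1) j (ω j) then boosted G p θ y else 0 := by
  rw [clashWeight, conflictWeight, ← sum_fiberwise (branch vert G x v) Prod.fst]
  refine sum_congr rfl fun i _ => ?_
  rw [sum_congr rfl fun y hy => by rw [(mem_filter.1 hy).2]]
  split_ifs with h
  · obtain ⟨j, -, c, hc, -⟩ := h
    rw [branchCharge, Option.mem_def.1 hc, Option.elim_some]
  · exact sum_const_zero.symm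

theorem NibbleState.listWeight_le_two (hp : NibbleState vert G F p a m τ)
    (hG : IsLinearCover vert G k) (hθ : 0 ≤ θ) (hθk : θ * (k + 1) ≤ 1 / 2) (e : A) :
    listWeight G p θ e ω ≤ 2 :=
  calc listWeight G p θ e ω ≤ ∑ c, 2 * p (e, c) := by
        rw [listWeight_eq]
        refine sum_le_sum fun c _ => ?_
        split_ifs
        · exact hp.boosted_le hG hθ hθk _
        · linarith [hp.nonneg (e, c)]
    _ ≤ 2 := by
        rw [← mul_sum]
        linarith [hp.sum_le_one e]

theorem NibbleState.sum_branch_nextWeight_mul_le (hp : NibbleState vert G F p a m τ)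
    (hG : IsLinearCover vert G k) (hθ : 0 ≤ θ) {b : ℝ} (hb : 0 < b)
    (hlist : ∀ e ∈ F, b ≤ listWeight G p θ e ω) (x : A × C) (v : V) :
    (∑ y ∈ branch vert G x v, nextWeight G F p θ ω y) * b ≤
      branchWeight vert G p θ x v ω + clashWeight vert G p θ x v ω := by
  rw [clashWeight_eq, branchWeight, unblockedWeight, ← sum_add_distrib, sum_mul]
  refine sum_le_sum fun y _ => ?_
  have hw := hp.boosted_nonneg hθ y
  by_cases hy : y.1 ∈ nextEdges G F ω ∧ Survives G ω y
  swap
  · rw [nextWeight, if_neg hy, zero_mul]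
    refine add_nonneg ?_ ?_ <;> split_ifs <;> simp [hw]
  have hle : nextWeight G F p θ ω y * b ≤ boosted G p θ y := by
    have hlb := hlist y.1 (mem_nextEdges.1 hy.1).1
    rw [nextWeight, if_pos hy, div_mul_eq_mul_div, div_le_iff₀ (hb.trans_le hlb)]
    gcongr
  refine hle.trans ?_
  by_cases hblock : ∀ l ∈ blockers vert G v y, ¬Picked ω l
  · rw [ite_cond_eq_true _ _ (eq_true hblock)]
    refine le_add_of_nonneg_right ?_
    split_ifs <;> simp [hw]
  · push Not at hblock
    obtain ⟨l, hl, hpick⟩ := hblock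
    have hly : l.1 = y.1 := (mem_blockers.1 hl).resolve_right fun h => hy.2 l h.1 hpick
    rw [if_pos (exists_clash_of_mem_nextEdges hG.fst_ne hy.1 hpick hly)]
    refine le_add_of_nonneg_left ?_
    split_ifs <;> simp [hw]

theorem lt_listWeight_of_not_nibbleFails (hω : ∀ e, ¬NibbleFails vert G k F p a θ e ω) {e : A}
    (he : e ∈ F) : 1 - (θ * (k + 1)) ^ 2 < listWeight G p θ e ω := by
  by_contra h
  exact hω e (Or.inl ⟨he, not_lt.1 h⟩)

theorem sq_mul_succ_le (hθ : 0 ≤ θ) (hθk : θ * (k + 1) ≤ 1 / 2) :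
    (θ * (k + 1)) ^ 2 ≤ 1 / 4 := by
  have : 0 ≤ θ * (k + 1) := by positivity
  nlinarith

theorem NibbleState.sum_branch_nextWeight_le (hp : NibbleState vert G F p a m τ)
    (hG : IsLinearCover vert G k) (hθ : 0 ≤ θ) (hθk : θ * (k + 1) ≤ 1 / 2)
    (hω : ∀ e, ¬NibbleFails vert G k F p a θ e ω) {d : ℝ} (hd : 0 ≤ d)
    (hstep : d + 10 * (θ * (k + 1)) ^ 2 ≤ θ * a * (1 - a)) {x : A × C} (hx : p x ≠ 0) {v : V}
    (hv : v ∈ vert x.1) : ∑ y ∈ branch vert G x v, nextWeight G F p θ ω y ≤ a - d := by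
  have ha₁ := hp.a_le_one
  set u := (θ * (k + 1)) ^ 2 with hu
  have : 0 ≤ u := sq_nonneg _
  have hb : 0 < 1 - u := by linarith [sq_mul_succ_le hθ hθk]
  have herr : (32 * k + 3) * θ ^ 2 ≤ 9 * u := by
    have hk : (32 * k + 3 : ℝ) ≤ 9 * (k + 1) ^ 2 := by nlinarith [sq_nonneg ((9 : ℝ) * k - 7)]
    calc (32 * k + 3) * θ ^ 2 ≤ 9 * (k + 1) ^ 2 * θ ^ 2 := by gcongr
      _ = 9 * u := by rw [hu]; ring
  have hlist : ∀ e ∈ F, 1 - u ≤ listWeight G p θ e ω := fun e he =>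
    (lt_listWeight_of_not_nibbleFails hω he).le
  have hgood : branchWeight vert G p θ x v ω < a - θ * a * (1 - a) + 2 * θ ^ 2 ∧
      clashWeight vert G p θ x v ω < (32 * k + 1) * θ ^ 2 := by
    rw [← not_le, ← not_le, ← not_or]
    exact fun h => hω x.1 (Or.inr ⟨x.2, hx, v, hv, h⟩)
  refine le_of_mul_le_mul_right ?_ hb
  calc (∑ y ∈ branch vert G x v, nextWeight G F p θ ω y) * (1 - u)
      ≤ branchWeight vert G p θ x v ω + clashWeight vert G p θ x v ω :=
        hp.sum_branch_nextWeight_mul_le hG hθ hb hlist x v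
    _ ≤ a - θ * a * (1 - a) + 9 * u := by linarith
    _ ≤ (a - d) * (1 - u) := by nlinarith

namespace NibbleState

theorem nextWeight_nonneg (hp : NibbleState vert G F p a m τ) (hθ : 0 ≤ θ) (x : A × C) :
    0 ≤ nextWeight G F p θ ω x := by
  rw [nextWeight]
  split_ifs
  · refine div_nonneg (hp.boosted_nonneg hθ x) ?_
    rw [listWeight_eq]
    refine sum_nonneg fun c _ => ?_
    split_ifs
    exacts [hp.boosted_nonneg hθ _, le_rfl]
  · exact le_rfl

theorem nextWeight_le (hp : NibbleState vert G F p a m τ) (hG : IsLinearCover vert G k)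
    (hθ : 0 ≤ θ) (hθk : θ * (k + 1) ≤ 1 / 2) (hlist : ∀ e ∈ F, 1 / 2 ≤ listWeight G p θ e ω)
    (x : A × C) : nextWeight G F p θ ω x ≤ 4 * m := by
  have hm := hp.m_pos
  rw [nextWeight]
  split_ifs with hx
  · have hlb := hlist x.1 (mem_nextEdges.1 hx.1).1
    rw [div_le_iff₀ (by linarith)]
    nlinarith [hp.boosted_le hG hθ hθk x, hp.le_m x]
  · positivity

theorem le_nextWeight (hp : NibbleState vert G F p a m τ) (hG : IsLinearCover vert G k)
    (hθ : 0 ≤ θ) (hθk : θ * (k + 1) ≤ 1 / 2) (hlist : ∀ e ∈ F, 1 / 2 ≤ listWeight G p θ e ω)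
    {x : A × C} (hx : nextWeight G F p θ ω x ≠ 0) : τ / 2 ≤ nextWeight G F p θ ω x := by
  obtain ⟨hnext, hsurv, hpx⟩ := nextWeight_ne_zero hx
  have hlb := hlist x.1 (mem_nextEdges.1 hnext).1
  rw [nextWeight, if_pos ⟨hnext, hsurv⟩]
  have := hp.τ_pos
  have := hp.boosted_nonneg hθ x
  gcongr
  · exact (hp.τ_le x hpx).trans (hp.le_boosted hθ x)
  · exact hp.listWeight_le_two hG hθ hθk x.1

theorem sum_nextWeight_eq_one {e : A} (he : e ∈ nextEdges G F ω)
    (hlist : listWeight G p θ e ω ≠ 0) : ∑ c, nextWeight G F p θ ω (e, c) = 1 := by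
  rw [← div_self hlist]
  nth_rw 1 [listWeight_eq]
  rw [sum_div]
  refine sum_congr rfl fun c _ => ?_
  rw [nextWeight, ite_div, zero_div]
  congr 1
  simp [he]

theorem next (hp : NibbleState vert G F p a m τ) (hG : IsLinearCover vert G k) (hθ : 0 ≤ θ)
    (hθk : θ * (k + 1) ≤ 1 / 2) (hω : ∀ e, ¬NibbleFails vert G k F p a θ e ω) {d : ℝ}
    (hd : 0 ≤ d) (hstep : d + 10 * (θ * (k + 1)) ^ 2 ≤ θ * a * (1 - a)) :
    NibbleState vert (liveGraph G (nextWeight G F p θ ω)) (nextEdges G F ω)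
      (nextWeight G F p θ ω) (a - d) (4 * m) (τ / 2) := by
  have ha₀ := hp.a_nonneg
  have ha₁ := hp.a_le_one
  have had : 0 ≤ a - d := by
    have : θ ≤ 1 := by nlinarith [k.cast_nonneg (α := ℝ)]
    nlinarith [sq_nonneg (θ * (k + 1)), mul_nonneg hθ ha₀]
  have hlist : ∀ e ∈ F, 1 / 2 ≤ listWeight G p θ e ω := fun e he => by
    linarith [lt_listWeight_of_not_nibbleFails hω he, sq_mul_succ_le hθ hθk]
  exact
    { a_nonneg := had
      a_le_one := by linarith
      m_pos := by linarith [hp.m_pos]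
      τ_pos := half_pos hp.τ_pos
      τ_le_one := by linarith [hp.τ_le_one, hp.τ_pos]
      nonneg := hp.nextWeight_nonneg hθ
      le_m := hp.nextWeight_le hG hθ hθk hlist
      τ_le := fun x hx => hp.le_nextWeight hG hθ hθk hlist hx
      fst_mem := fun x hx => (nextWeight_ne_zero hx).1
      sum_eq_one := fun e he => sum_nextWeight_eq_one he (by
        linarith [hlist e (mem_nextEdges.1 he).1] : listWeight G p θ e ω > 0).ne'
      ne_zero_of_adj := fun x y hxy => hxy.2.1
      sum_branch_le := fun x v hv => by
        by_cases hx : nextWeight G F p θ ω x = 0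
        · have hbranch : branch vert (liveGraph G (nextWeight G F p θ ω)) x v = ∅ :=
            eq_empty_of_forall_notMem fun y hy => (mem_branch.1 hy).1.2.1 hx
          rwa [hbranch, sum_empty]
        · refine (sum_le_sum_of_subset_of_nonneg (fun y hy => ?_) fun y _ _ =>
            hp.nextWeight_nonneg hθ y).trans
            (hp.sum_branch_nextWeight_le hG hθ hθk hω hd hstep (nextWeight_ne_zero hx).2.2 hv)
          rw [mem_branch] at hy ⊢
          exact ⟨hy.1.1, hy.2⟩ }

end NibbleState

end NextState

section Locality

open scoped Classical

variable {V A C : Type*} [Fintype A] {vert : A → Finset V} {G : SimpleGraph (A × C)} {k : ℕ}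
  {F : Finset A} {p : A × C → ℝ} {a m τ θ : ℝ}

/-- The edges that equal `e` or carry a colour that blocks a colour at `e`. -/
noncomputable def near (G : SimpleGraph (A × C)) (e : A) : Finset A :=
  {f | f = e ∨ ∃ c c', G.Adj (e, c) (f, c')}

theorem mem_near {e f : A} : f ∈ near G e ↔ f = e ∨ ∃ c c', G.Adj (e, c) (f, c') := by
  simp [near]

theorem mem_near_comm {e f : A} : f ∈ near G e ↔ e ∈ near G f := by
  rw [mem_near, mem_near, eq_comm, exists_comm]
  simp only [G.adj_comm]

theorem mem_near_of_adj {x y : A × C} (h : G.Adj x y) : y.1 ∈ near G x.1 :=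
  mem_near.2 (Or.inr ⟨x.2, y.2, h⟩)

/-- The edges within two blocking steps of `e`: whether the nibble fails at `e` is determined by
the picks at these edges. -/
noncomputable def nearTwo (G : SimpleGraph (A × C)) (e : A) : Finset A :=
  (near G e).biUnion (near G)

theorem mem_nearTwo_comm {e f : A} : f ∈ nearTwo G e ↔ e ∈ nearTwo G f := by
  simp only [nearTwo, mem_biUnion, mem_near_comm (e := e), mem_near_comm (f := f), and_comm]

theorem near_subset_nearTwo {e f : A} (hf : f ∈ near G e) : near G f ⊆ nearTwo G e :=
  subset_biUnion_of_mem (near G) hf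

theorem near_subset_nearTwo_self (e : A) : near G e ⊆ nearTwo G e :=
  near_subset_nearTwo (mem_near.2 (Or.inl rfl))

theorem card_nearTwo_le {D : ℝ} (hD : ∀ e, (#(near G e) : ℝ) ≤ D) (e : A) :
    (#(nearTwo G e) : ℝ) ≤ D ^ 2 :=
  calc (#(nearTwo G e) : ℝ) ≤ ∑ f ∈ near G e, (#(near G f) : ℝ) := mod_cast card_biUnion_le
    _ ≤ #(near G e) * D := by
        rw [← nsmul_eq_mul]
        exact sum_le_card_nsmul _ _ _ fun f _ => hD f
    _ ≤ D ^ 2 := by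
        rw [sq]
        exact mul_le_mul_of_nonneg_right (hD e) ((Nat.cast_nonneg _).trans (hD e))

theorem card_not_disjoint_nearTwo_le {D : ℝ} (hD : ∀ e, (#(near G e) : ℝ) ≤ D) (e : A) :
    (#{f | ¬Disjoint (nearTwo G e) (nearTwo G f)} : ℝ) ≤ D ^ 4 := by
  have hsub : ({f | ¬Disjoint (nearTwo G e) (nearTwo G f)} : Finset A) ⊆
      (nearTwo G e).biUnion (nearTwo G) := fun f hf => by
    obtain ⟨g, hge, hgf⟩ := Finset.not_disjoint_iff.1 (mem_filter.1 hf).2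
    exact mem_biUnion.2 ⟨g, hge, mem_nearTwo_comm.1 hgf⟩
  calc (#{f | ¬Disjoint (nearTwo G e) (nearTwo G f)} : ℝ)
      ≤ ∑ f ∈ nearTwo G e, (#(nearTwo G f) : ℝ) :=
        mod_cast (card_le_card hsub).trans card_biUnion_le
    _ ≤ #(nearTwo G e) * D ^ 2 := by
        rw [← nsmul_eq_mul]
        exact sum_le_card_nsmul _ _ _ fun f _ => card_nearTwo_le hD f
    _ ≤ D ^ 4 := by
        have := card_nearTwo_le hD e
        nlinarith [sq_nonneg D]

variable {ω ω' : A → Option C}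

theorem exists_clash_congr {i : A} (h : ∀ f ∈ near G i, ω f = ω' f) :
    (∃ j ≠ i, Clash G i (ω i) j (ω j)) ↔ ∃ j ≠ i, Clash G i (ω' i) j (ω' j) := by
  have himp : ∀ {ω ω' : A → Option C}, (∀ f ∈ near G i, ω f = ω' f) →
      (∃ j ≠ i, Clash G i (ω i) j (ω j)) → ∃ j ≠ i, Clash G i (ω' i) j (ω' j) := by
    rintro ω ω' h ⟨j, hj, c, hc, c', hc', hadj⟩
    rw [h i (mem_near.2 (Or.inl rfl))] at hc
    rw [h j (mem_near_of_adj hadj)] at hc'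
    exact ⟨j, hj, c, hc, c', hc', hadj⟩
  exact ⟨himp h, himp fun f hf => (h f hf).symm⟩

variable [Fintype C]

theorem listWeight_congr {e : A} (h : ∀ f ∈ near G e, ω f = ω' f) :
    listWeight G p θ e ω = listWeight G p θ e ω' := by
  have hsurv : ∀ c, Survives G ω (e, c) ↔ Survives G ω' (e, c) := fun c =>
    forall₂_congr fun y hy => by rw [Picked, Picked, h y.1 (mem_near_of_adj hy)]
  rw [listWeight_eq, listWeight_eq]
  simp only [hsurv]

theorem branchWeight_congr {x : A × C} (h : ∀ f ∈ nearTwo G x.1, ω f = ω' f) (v : V) :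
    branchWeight vert G p θ x v ω = branchWeight vert G p θ x v ω' := by
  refine sum_congr rfl fun y hy => ?_
  congr 1
  refine propext (forall₂_congr fun l hl => ?_)
  have hy' := mem_near_of_adj (mem_branch.1 hy).1
  have hl' : l.1 ∈ near G y.1 := (mem_blockers.1 hl).elim (fun h => mem_near.2 (Or.inl h))
    fun h => mem_near_of_adj h.1
  rw [Picked, Picked, h l.1 (near_subset_nearTwo hy' hl')]

theorem clashWeight_congr {x : A × C} (h : ∀ f ∈ nearTwo G x.1, ω f = ω' f) (v : V) :
    clashWeight vert G p θ x v ω = clashWeight vert G p θ x v ω' := by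
  rw [clashWeight_eq, clashWeight_eq]
  exact sum_congr rfl fun y hy => if_congr (exists_clash_congr fun f hf =>
    h f (near_subset_nearTwo (mem_near_of_adj (mem_branch.1 hy).1) hf)) rfl rfl

theorem dependsOn_nibbleFails (e : A) :
    DependsOn (NibbleFails vert G k F p a θ e) (nearTwo G e : Set A) := by
  intro ω ω' h
  have hlist := listWeight_congr (p := p) (θ := θ) fun f hf =>
    h f (near_subset_nearTwo_self e hf)
  have hbranch := fun c v => branchWeight_congr (vert := vert) (p := p) (θ := θ) (x := (e, c)) h v
  have hclash := fun c v => clashWeight_congr (vert := vert) (p := p) (θ := θ) (x := (e, c)) h v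
  simp only [NibbleFails, hlist, hbranch, hclash]

end Locality

section ExistsNibble

open scoped Classical

variable {V A C : Type*} [Fintype A] [Fintype C] {vert : A → Finset V} {G : SimpleGraph (A × C)}
  {k : ℕ} {F : Finset A} {p : A × C → ℝ} {a m τ θ : ℝ}

namespace NibbleState

theorem card_ne_zero_le (hp : NibbleState vert G F p a m τ) (e : A) :
    (#{c | p (e, c) ≠ 0} : ℝ) ≤ 1 / τ := by
  rw [le_div_iff₀ hp.τ_pos, ← nsmul_eq_mul]
  calc #{c | p (e, c) ≠ 0} • τ ≤ ∑ c with p (e, c) ≠ 0, p (e, c) :=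
        card_nsmul_le_sum _ _ _ fun c hc => hp.τ_le _ (mem_filter.1 hc).2
    _ ≤ ∑ c, p (e, c) := sum_le_univ_sum_of_nonneg fun c => hp.nonneg _
    _ ≤ 1 := hp.sum_le_one e

theorem card_neighborFinset_le (hp : NibbleState vert G F p a m τ) (hG : IsLinearCover vert G k)
    (x : A × C) : (#(G.neighborFinset x) : ℝ) ≤ k / τ := by
  rw [le_div_iff₀ hp.τ_pos, ← nsmul_eq_mul]
  calc #(G.neighborFinset x) • τ ≤ ∑ y ∈ G.neighborFinset x, p y :=
        card_nsmul_le_sum _ _ _ fun y hy => hp.τ_le y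
          (hp.ne_zero_of_adj y x ((G.mem_neighborFinset x y).1 hy).symm)
    _ ≤ k * a := hp.sum_neighborFinset_le hG x
    _ ≤ k := mul_le_of_le_one_right k.cast_nonneg hp.a_le_one

theorem card_near_le (hp : NibbleState vert G F p a m τ) (hG : IsLinearCover vert G k) (e : A) :
    (#(near G e) : ℝ) ≤ (k + 1) / τ ^ 2 := by
  have hτ := hp.τ_pos
  have hsub : near G e ⊆ insert e (({c | p (e, c) ≠ 0} : Finset C).biUnion fun c =>
      (G.neighborFinset (e, c)).image Prod.fst) := by
    intro f hf
    obtain rfl | ⟨c, c', hadj⟩ := mem_near.1 hf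
    · exact mem_insert_self _ _
    · refine mem_insert_of_mem (mem_biUnion.2 ⟨c, ?_, mem_image.2 ⟨(f, c'), ?_, rfl⟩⟩)
      · exact mem_filter.2 ⟨mem_univ c, hp.ne_zero_of_adj _ _ hadj⟩
      · exact (G.mem_neighborFinset _ _).2 hadj
  have hcard : #(near G e) ≤ ∑ c with p (e, c) ≠ 0, #(G.neighborFinset (e, c)) + 1 :=
    (card_le_card hsub).trans <| (card_insert_le _ _).trans <| Nat.add_le_add_right
      (card_biUnion_le.trans (sum_le_sum fun c _ => card_image_le)) 1
  calc (#(near G e) : ℝ)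
      ≤ ∑ c with p (e, c) ≠ 0, (#(G.neighborFinset (e, c)) : ℝ) + 1 := mod_cast hcard
    _ ≤ #{c | p (e, c) ≠ 0} * (k / τ) + 1 := by
        rw [← nsmul_eq_mul]
        gcongr
        exact sum_le_card_nsmul _ _ _ fun c _ => hp.card_neighborFinset_le hG (e, c)
    _ ≤ 1 / τ * (k / τ) + 1 / τ ^ 2 := by
        gcongr
        · exact hp.card_ne_zero_le e
        · exact one_le_one_div (by positivity) (pow_le_one₀ hτ.le hp.τ_le_one)
    _ = (k + 1) / τ ^ 2 := by
        field_simp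

section Measure

variable [MeasurableSpace (Option C)] [MeasurableSingletonClass (Option C)]
  {μ : A → Measure (Option C)} [∀ e, IsProbabilityMeasure (μ e)]

theorem measureReal_nibbleFails_le (hp : NibbleState vert G F p a m τ)
    (hG : IsLinearCover vert G k) (hθ : 0 < θ) (hθk : θ * (k + 1) ≤ 1 / 2)
    (hμ : ∀ x : A × C, (μ x.1).real {some x.2} = θ * p x) (e : A) :
    (Measure.pi μ).real {ω | NibbleFails vert G k F p a θ e ω} ≤
      (2 * k + 1) / τ * nibbleTail θ k m := by
  have hτ := hp.τ_pos
  set P := Measure.pi μ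
  set ρ := nibbleTail θ k m
  have hρ : 0 ≤ ρ := (exp_pos _).le
  let listBad : Set (A → Option C) :=
    {ω | e ∈ F ∧ listWeight G p θ e ω ≤ 1 - (θ * (k + 1)) ^ 2}
  let branchBad (c : C) (v : V) : Set (A → Option C) :=
    {ω | a - θ * a * (1 - a) + 2 * θ ^ 2 ≤ branchWeight vert G p θ (e, c) v ω} ∪
      {ω | (32 * k + 1) * θ ^ 2 ≤ clashWeight vert G p θ (e, c) v ω}
  have hlist : P.real listBad ≤ ρ := by
    by_cases he : e ∈ F
    · simpa only [listBad, he, true_and] using hp.measureReal_listWeight_le_le hG hθ hθk hμ he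
    · simpa only [listBad, he, false_and, Set.ofPred_false, measureReal_empty] using hρ
  have hbranch : ∀ c, ∀ v ∈ vert e, P.real (branchBad c v) ≤ 2 * ρ := fun c v hv =>
    (measureReal_union_le _ _).trans <| (add_le_add
      (hp.measureReal_branchWeight_ge_le hG hθ hθk hμ (x := (e, c)) hv)
      (hp.measureReal_clashWeight_ge_le hG hθ hθk hμ (x := (e, c)) hv)).trans_eq (two_mul ρ).symm
  have hcolour : ∀ c, P.real (⋃ v ∈ vert e, branchBad c v) ≤ k * (2 * ρ) := fun c =>
    (measureReal_biUnion_finset_le _ _).trans <| (sum_le_card_nsmul _ _ _ (hbranch c)).trans <| by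
      rw [nsmul_eq_mul]
      have := hG.card_le e
      gcongr
  have hsub : {ω | NibbleFails vert G k F p a θ e ω} ⊆
      listBad ∪ ⋃ c ∈ ({c | p (e, c) ≠ 0} : Finset C), ⋃ v ∈ vert e, branchBad c v := by
    rintro ω (h | ⟨c, hc, v, hv, h⟩)
    · exact Or.inl h
    · exact Or.inr (Set.mem_iUnion₂.2 ⟨c, mem_filter.2 ⟨mem_univ c, hc⟩,
        Set.mem_iUnion₂.2 ⟨v, hv, h⟩⟩)
  calc P.real {ω | NibbleFails vert G k F p a θ e ω}
      ≤ ρ + #{c | p (e, c) ≠ 0} • (k * (2 * ρ)) :=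
        (measureReal_mono hsub).trans <| (measureReal_union_le _ _).trans <| add_le_add hlist <|
          (measureReal_biUnion_finset_le _ _).trans <| sum_le_card_nsmul _ _ _ fun c _ => hcolour c
    _ ≤ 1 / τ * ρ + 1 / τ * (k * (2 * ρ)) := by
        rw [nsmul_eq_mul]
        gcongr
        · exact le_mul_of_one_le_left hρ (one_le_one_div hτ hp.τ_le_one)
        · exact hp.card_ne_zero_le e
    _ = (2 * k + 1) / τ * ρ := by ring

theorem exists_not_nibbleFails (hp : NibbleState vert G F p a m τ)
    (hG : IsLinearCover vert G k) (hθ : 0 < θ) (hθk : θ * (k + 1) ≤ 1 / 2)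
    (hμ : ∀ x : A × C, (μ x.1).real {some x.2} = θ * p x)
    (htail : 8 * (k + 1) ^ 5 * nibbleTail θ k m ≤ τ ^ 9) :
    ∃ ω : A → Option C, (∀ e, ¬NibbleFails vert G k F p a θ e ω) ∧
      ∀ e, (μ e).real {ω e} ≠ 0 := by
  have hτ := hp.τ_pos
  refine exists_forall_notMem_of_local (T := nearTwo G)
    (Γ := fun e => {f | ¬Disjoint (nearTwo G e) (nearTwo G f)})
    (A := fun e => {ω | NibbleFails vert G k F p a θ e ω}) dependsOn_nibbleFails
    (fun e => ?_) (fun e f hf => ?_) (fun e => ?_)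
  · have he : e ∈ nearTwo G e := near_subset_nearTwo_self e (mem_near.2 (Or.inl rfl))
    exact mem_filter.2 ⟨mem_univ e, Finset.not_disjoint_iff.2 ⟨e, he, he⟩⟩
  · by_contra h
    exact hf (mem_filter.2 ⟨mem_univ f, h⟩)
  · have hρ : 0 ≤ nibbleTail θ k m := (exp_pos _).le
    calc ∑ f with ¬Disjoint (nearTwo G e) (nearTwo G f),
          (Measure.pi μ).real {ω | NibbleFails vert G k F p a θ f ω}
        ≤ #{f | ¬Disjoint (nearTwo G e) (nearTwo G f)} • ((2 * k + 1) / τ * nibbleTail θ k m) :=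
          sum_le_card_nsmul _ _ _ fun f _ => hp.measureReal_nibbleFails_le hG hθ hθk hμ f
      _ ≤ ((k + 1) / τ ^ 2) ^ 4 * (2 * (k + 1) / τ * nibbleTail θ k m) := by
          rw [nsmul_eq_mul]
          gcongr
          · exact card_not_disjoint_nearTwo_le (hp.card_near_le hG) e
          · linarith
      _ = 8 * (k + 1) ^ 5 * nibbleTail θ k m / τ ^ 9 / 4 := by
          field_simp
          ring
      _ ≤ 1 / 4 := by
          gcongr
          exact div_le_one_of_le₀ htail (by positivity)

theorem exists_pick_measure (hp : NibbleState vert G F p a m τ) (hθ : 0 ≤ θ) (hθ₁ : θ ≤ 1) :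
    ∃ μ : A → Measure (Option C), (∀ e, IsProbabilityMeasure (μ e)) ∧
      ∀ x : A × C, (μ x.1).real {some x.2} = θ * p x := by
  choose μ hprob hμ using fun e : A => exists_isProbabilityMeasure_option
    (r := fun c => θ * p (e, c)) (fun c => mul_nonneg hθ (hp.nonneg _)) (by
      rw [← mul_sum]
      exact mul_le_one₀ hθ₁ (sum_nonneg fun c _ => hp.nonneg _) (hp.sum_le_one e))
  exact ⟨μ, hprob, fun x => hμ x.1 x.2⟩

end Measure

theorem hasColouring_of_forall_next (hp : NibbleState vert G F p a m τ)
    (hG : IsLinearCover vert G k) (hθ : 0 < θ) (hθk : θ * (k + 1) ≤ 1 / 2)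
    (htail : 8 * (k + 1) ^ 5 * nibbleTail θ k m ≤ τ ^ 9) {d : ℝ} (hd : 0 ≤ d)
    (hstep : d + 10 * (θ * (k + 1)) ^ 2 ≤ θ * a * (1 - a))
    (hnext : ∀ (G' : SimpleGraph (A × C)) (F' : Finset A) (p' : A × C → ℝ),
      IsLinearCover vert G' k → NibbleState vert G' F' p' (a - d) (4 * m) (τ / 2) →
        HasColouring G' F' p') :
    HasColouring G F p := by
  let _ : MeasurableSpace (Option C) := ⊤
  have _ : MeasurableSingletonClass (Option C) := ⟨fun _ => trivial⟩
  have hθ₁ : θ ≤ 1 := by nlinarith [(Nat.cast_nonneg k : (0 : ℝ) ≤ k)]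
  obtain ⟨μ, _, hμ⟩ := hp.exists_pick_measure hθ.le hθ₁
  obtain ⟨ω, hω, hω₀⟩ := hp.exists_not_nibbleFails hG hθ hθk hμ htail
  refine HasColouring.of_nextEdges (hnext _ _ _ (hG.mono liveGraph_le)
    (hp.next hG hθ.le hθk hω hd hstep)) (fun x hx => (nextWeight_ne_zero hx).2.symm)
    fun x hx => ?_
  have hne := hω₀ x.1
  rw [show ω x.1 = some x.2 from hx, hμ] at hne
  exact right_ne_zero_of_mul hne

end NibbleState

end ExistsNibble

section FinishingStep

open scoped Classical

theorem sum_filter_not_disjoint_le {κ ι : Type*} [Fintype κ] {g : κ → ℝ} (hg : ∀ r, 0 ≤ g r)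
    (T : κ → Finset ι) (s : Finset ι) :
    ∑ r with ¬Disjoint s (T r), g r ≤ ∑ e ∈ s, ∑ r with e ∈ T r, g r := by
  simp only [sum_filter]
  rw [sum_comm]
  refine sum_le_sum fun r _ => ?_
  have hterm : ∀ e ∈ s, 0 ≤ if e ∈ T r then g r else 0 := fun e _ => by
    split_ifs
    exacts [hg r, le_rfl]
  by_cases h : Disjoint s (T r)
  · rw [if_neg (not_not.2 h)]
    exact sum_nonneg hterm
  · obtain ⟨e, hes, her⟩ := Finset.not_disjoint_iff.1 h
    rw [if_pos h]
    calc g r = if e ∈ T r then g r else 0 := (if_pos her).symm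
      _ ≤ _ := single_le_sum hterm hes

theorem measureReal_none_eq_zero {C : Type*} [Fintype C] [MeasurableSpace (Option C)]
    [MeasurableSingletonClass (Option C)] {μ : Measure (Option C)} [IsProbabilityMeasure μ]
    (hμ : ∑ c, μ.real {some c} = 1) : μ.real {none} = 0 := by
  have htotal : ∑ o, μ.real {o} = 1 := by
    rw [sum_measureReal_singleton, coe_univ, probReal_univ]
  rw [Fintype.sum_option, hμ] at htotal
  linarith

variable {V A C : Type*} [Fintype A] [Fintype C] {vert : A → Finset V} {G : SimpleGraph (A × C)}
  {k : ℕ} {F : Finset A} {p : A × C → ℝ} {a m τ θ : ℝ}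
  [MeasurableSpace (Option C)] [MeasurableSingletonClass (Option C)]
  {μ : A → Measure (Option C)} [∀ e, IsProbabilityMeasure (μ e)]

theorem sum_measureReal_adj_picked_le (hp : NibbleState vert G F p a m τ)
    (hG : IsLinearCover vert G k) (hμ : ∀ x : A × C, (μ x.1).real {some x.2} = p x) (e : A) :
    ∑ c, ∑ y, (Measure.pi μ).real {ω | G.Adj (e, c) y ∧ Picked ω (e, c) ∧ Picked ω y} ≤
      k * a := by
  have hpair : ∀ c y, (Measure.pi μ).real {ω | G.Adj (e, c) y ∧ Picked ω (e, c) ∧ Picked ω y} =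
      if G.Adj (e, c) y then p (e, c) * p y else 0 := by
    intro c y
    split_ifs with hadj
    · simpa only [hadj, true_and] using measureReal_picked_inter hμ (hG.fst_ne _ _ hadj)
    · simp only [hadj, false_and, Set.ofPred_false, measureReal_empty]
  calc ∑ c, ∑ y, (Measure.pi μ).real {ω | G.Adj (e, c) y ∧ Picked ω (e, c) ∧ Picked ω y}
      = ∑ c, p (e, c) * ∑ y ∈ G.neighborFinset (e, c), p y := by
        simp only [hpair, mul_sum, ← sum_filter, SimpleGraph.neighborFinset_eq_filter]
    _ ≤ ∑ c, p (e, c) * (k * a) := by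
        gcongr with c
        · exact hp.nonneg _
        · exact hp.sum_neighborFinset_le hG (e, c)
    _ ≤ k * a := by
        rw [← sum_mul]
        exact mul_le_of_le_one_left (mul_nonneg k.cast_nonneg hp.a_nonneg) (hp.sum_le_one e)

theorem sum_measureReal_adj_picked_mem_le (hp : NibbleState vert G F p a m τ)
    (hG : IsLinearCover vert G k) (hμ : ∀ x : A × C, (μ x.1).real {some x.2} = p x) (e : A) :
    ∑ r : (A × C) × (A × C) with e ∈ ({r.1.1, r.2.1} : Finset A),
      (Measure.pi μ).real {ω | G.Adj r.1 r.2 ∧ Picked ω r.1 ∧ Picked ω r.2} ≤ 2 * (k * a) := by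
  set g : (A × C) → (A × C) → ℝ := fun x y =>
    (Measure.pi μ).real {ω | G.Adj x y ∧ Picked ω x ∧ Picked ω y}
  have hsymm : ∀ x y, g x y = g y x := fun x y => by
    simp only [g, G.adj_comm x y, and_comm (a := Picked _ x)]
  have hsplit : ∀ r : (A × C) × (A × C),
      (if e ∈ ({r.1.1, r.2.1} : Finset A) then g r.1 r.2 else 0) ≤
        (if r.1.1 = e then g r.1 r.2 else 0) + if r.2.1 = e then g r.1 r.2 else 0 := fun r => by
    have hg : 0 ≤ g r.1 r.2 := measureReal_nonneg
    simp only [mem_insert, mem_singleton, @eq_comm _ e]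
    split_ifs <;> first | linarith | simp_all
  have hfst : ∑ x : A × C, ∑ y, (if x.1 = e then g x y else 0) ≤ k * a := by
    refine le_of_eq_of_le ?_ (sum_measureReal_adj_picked_le hp hG hμ e)
    rw [Fintype.sum_prod_type, sum_eq_single e] <;> simp +contextual [g]
  rw [sum_filter]
  refine (sum_le_sum fun r _ => hsplit r).trans ?_
  have hsnd : ∑ y : A × C, ∑ x, (if y.1 = e then g x y else 0) ≤ k * a := by
    simpa only [fun x y => hsymm y x] using hfst
  rw [sum_add_distrib, two_mul]
  exact add_le_add
    ((Fintype.sum_prod_type' fun x y => if x.1 = e then g x y else 0).trans_le hfst)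
    ((Fintype.sum_prod_type_right' fun x y => if y.1 = e then g x y else 0).trans_le hsnd)

theorem exists_picks_not_adj (hp : NibbleState vert G F p a m τ)
    (hG : IsLinearCover vert G k) (hμ : ∀ x : A × C, (μ x.1).real {some x.2} = p x)
    (hka : 16 * (k * a) ≤ 1) :
    ∃ ω : A → Option C, (∀ x y, G.Adj x y → Picked ω x → ¬Picked ω y) ∧
      ∀ e, (μ e).real {ω e} ≠ 0 := by
  let T : (A × C) × (A × C) → Finset A := fun q => {q.1.1, q.2.1}
  let Bad : (A × C) × (A × C) → Set (A → Option C) := fun q =>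
    {ω | G.Adj q.1 q.2 ∧ Picked ω q.1 ∧ Picked ω q.2}
  suffices ∃ ω : A → Option C, (∀ q, ω ∉ Bad q) ∧ ∀ e, (μ e).real {ω e} ≠ 0 from
    this.imp fun ω hω => ⟨fun x y hxy hx hy => hω.1 (x, y) ⟨hxy, hx, hy⟩, hω.2⟩
  refine exists_forall_notMem_of_local (T := T) (Γ := fun q => {r | ¬Disjoint (T q) (T r)})
    (fun q ω ω' h => ?_) (fun q => ?_) (fun q r hr => ?_) (fun q => ?_)
  · simp only [Bad, Set.mem_ofPred_eq, Picked, h q.1.1 (by simp [T]), h q.2.1 (by simp [T])]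
  · exact mem_filter.2 ⟨mem_univ q, Finset.not_disjoint_iff.2 ⟨q.1.1, by simp [T], by simp [T]⟩⟩
  · by_contra h
    exact hr (mem_filter.2 ⟨mem_univ r, h⟩)
  · have hedge := sum_measureReal_adj_picked_mem_le hp hG hμ
    have hcard : (#(T q) : ℝ) ≤ 2 := mod_cast card_le_two
    calc ∑ r with ¬Disjoint (T q) (T r), (Measure.pi μ).real (Bad r)
        ≤ ∑ e ∈ T q, ∑ r with e ∈ T r, (Measure.pi μ).real (Bad r) :=
          sum_filter_not_disjoint_le (fun _ => measureReal_nonneg) T (T q)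
      _ ≤ #(T q) * (2 * (k * a)) := by
          rw [← nsmul_eq_mul]
          exact sum_le_card_nsmul _ _ _ fun e _ => hedge e
      _ ≤ 2 * (2 * (k * a)) := by
          have := mul_nonneg k.cast_nonneg hp.a_nonneg
          gcongr
      _ ≤ 1 / 4 := by linarith

end FinishingStep

section Iteration

open scoped Classical

variable {V A C : Type*} [Fintype A] [Fintype C] {vert : A → Finset V} {G : SimpleGraph (A × C)}
  {k : ℕ} {F : Finset A} {p : A × C → ℝ} {a m τ θ : ℝ}

namespace NibbleState

theorem hasColouring_of_mul_le (hp : NibbleState vert G F p a m τ) (hG : IsLinearCover vert G k)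
    (hka : 16 * (k * a) ≤ 1) : HasColouring G F p := by
  let _ : MeasurableSpace (Option C) := ⊤
  have _ : MeasurableSingletonClass (Option C) := ⟨fun _ => trivial⟩
  obtain ⟨μ, _, hμ⟩ := hp.exists_pick_measure zero_le_one le_rfl
  simp only [one_mul] at hμ
  obtain ⟨ω, hindep, hω₀⟩ := exists_picks_not_adj hp hG hμ hka
  refine ⟨{x | Picked ω x}, fun x hx y hy _ hxy => hindep x y hxy hx hy, fun x hx => ?_,
    fun e he => ?_⟩
  · have hne := hω₀ x.1
    rwa [show ω x.1 = some x.2 from hx, hμ] at hne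
  · have hne : ω e ≠ none := fun h => by
      refine hω₀ e (h ▸ measureReal_none_eq_zero ?_)
      exact (sum_congr rfl fun c _ => hμ (e, c)).trans (hp.sum_eq_one e he)
    exact Option.ne_none_iff_exists'.1 hne

theorem hasColouring_of_iterate {a₀ d : ℝ} (hG : IsLinearCover vert G k)
    (hθ : 0 < θ) (hθk : θ * (k + 1) ≤ 1 / 2) (hd : 0 ≤ d)
    (hstep : ∀ a : ℝ, 1 < 16 * (k * a) → a ≤ a₀ → d + 10 * (θ * (k + 1)) ^ 2 ≤ θ * a * (1 - a))
    (N : ℕ) (hp : NibbleState vert G F p a m τ) (ha : a ≤ a₀) (hN : 16 * (k * (a - N * d)) ≤ 1)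
    (htail : 8 * (k + 1) ^ 5 * nibbleTail θ k (4 ^ N * m) ≤ (τ / 2 ^ N) ^ 9) :
    HasColouring G F p := by
  induction N generalizing G F p a m τ with
  | zero => exact hp.hasColouring_of_mul_le hG (by simpa using hN)
  | succ N ih =>
    by_cases hka : 16 * (k * a) ≤ 1
    · exact hp.hasColouring_of_mul_le hG hka
    have hm := hp.m_pos
    have hτ := hp.τ_pos
    refine hp.hasColouring_of_forall_next hG hθ hθk ?_ hd (hstep a (not_le.1 hka) ha)
      fun G' F' p' hG' hp' => ih hG' hp' (by linarith) ?_ ?_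
    · calc 8 * (k + 1) ^ 5 * nibbleTail θ k m
          ≤ 8 * (k + 1) ^ 5 * nibbleTail θ k (4 ^ (N + 1) * m) := by
            unfold nibbleTail
            gcongr
            exact le_mul_of_one_le_left hm.le (one_le_pow₀ (by norm_num))
        _ ≤ (τ / 2 ^ (N + 1)) ^ 9 := htail
        _ ≤ τ ^ 9 := by
            gcongr
            exact div_le_self hτ.le (one_le_pow₀ (by norm_num))
    · convert hN using 3
      push_cast
      ring
    · have hm' : 4 ^ N * (4 * m) = 4 ^ (N + 1) * m := by ring
      have hτ' : τ / 2 / 2 ^ N = τ / 2 ^ (N + 1) := by rw [div_div, pow_succ']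
      rwa [hm', hτ']

end NibbleState

end Iteration

section Asymptotics

open Filter Asymptotics

theorem eventually_mul_exp_neg_mul_le_pow {s c C K : ℝ} (hs : s < 1) (hc : 0 < c) (hC : 0 < C)
    (hK : 0 < K) (r : ℕ) :
    ∀ᶠ x : ℝ in atTop, C * exp (-(c * x)) ≤ (exp (-x ^ s) / x / K) ^ r := by
  have hpow : (fun x : ℝ => x ^ s) =o[atTop] id := by
    refine isLittleO_of_tendsto' ((eventually_ne_atTop 0).mono fun x hx h => absurd h hx) ?_
    refine (tendsto_rpow_neg_atTop (sub_pos.2 hs)).congr' ?_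
    filter_upwards [eventually_gt_atTop 0] with x hx
    rw [neg_sub, rpow_sub_one hx.ne', id]
  have hexponent : (fun x => log C + r * (x ^ s + log x + log K)) =o[atTop] id :=
    (isLittleO_const_id_atTop _).add
      (((hpow.add isLittleO_log_id_atTop).add (isLittleO_const_id_atTop _)).const_mul_left _)
  filter_upwards [hexponent.bound hc, eventually_gt_atTop 0] with x hx hx₀
  rw [id, norm_of_nonneg hx₀.le] at hx
  calc C * exp (-(c * x)) = exp (log C - c * x) := by
        rw [exp_sub, exp_log hC, exp_neg, div_eq_mul_inv]
    _ ≤ exp (r * (-x ^ s - log x - log K)) := by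
        rw [exp_le_exp]
        linarith [(le_norm_self _).trans hx]
    _ = (exp (-x ^ s) / x / K) ^ r := by
        rw [exp_nat_mul, exp_sub, exp_sub, exp_log hx₀, exp_log hK]

theorem exists_nibble_parameters (k : ℕ) {a₀ : ℝ} (ha₀ : 0 ≤ a₀) (ha₀₁ : a₀ < 1) :
    ∃ θ d : ℝ, 0 < θ ∧ θ * (k + 1) ≤ 1 / 2 ∧ 0 < d ∧ ∀ a : ℝ, 1 < 16 * (k * a) → a ≤ a₀ →
      d + 10 * (θ * (k + 1)) ^ 2 ≤ θ * a * (1 - a) := by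
  have hk : (0 : ℝ) ≤ k := k.cast_nonneg
  set β : ℝ := (1 - a₀) / (16 * (k + 1))
  have hβ : 0 < β := div_pos (sub_pos.2 ha₀₁) (by positivity)
  have hβ₁ : β ≤ 1 := div_le_one_of_le₀ (by linarith) (by positivity)
  set θ : ℝ := β / (20 * (k + 1) ^ 2)
  have hθ : 0 < θ := by positivity
  have hθβ : 20 * (θ * (k + 1) ^ 2) = β := by simp only [θ]; field_simp
  refine ⟨θ, θ * β / 2, hθ, by nlinarith, by positivity, fun a hka haa₀ => ?_⟩
  have ha : 0 < a := by
    by_contra! h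
    linarith [mul_nonpos_of_nonneg_of_nonpos hk h]
  have hgain : β ≤ a * (1 - a) := by
    calc β = 1 / (16 * (k + 1)) * (1 - a₀) := by simp only [β]; ring
      _ ≤ a * (1 - a) := by
          gcongr
          rw [div_le_iff₀ (by positivity)]
          linarith
  calc θ * β / 2 + 10 * (θ * (k + 1)) ^ 2
      = θ * β / 2 + θ * (20 * (θ * (k + 1) ^ 2)) / 2 := by ring
    _ = θ * β := by rw [hθβ]; ring
    _ ≤ θ * (a * (1 - a)) := by gcongr
    _ = θ * a * (1 - a) := (mul_assoc _ _ _).symm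

theorem NibbleState.eventually_hasColouring (k : ℕ) {a₀ s : ℝ} (ha₀ : 0 ≤ a₀) (ha₀₁ : a₀ < 1)
    (hs : s < 1) :
    ∀ᶠ ℓ : ℝ in atTop, ∀ {V A C : Type*} [Fintype A] [Fintype C] {vert : A → Finset V}
      {G : SimpleGraph (A × C)} {F : Finset A} {p : A × C → ℝ} {a : ℝ}, IsLinearCover vert G k →
      NibbleState vert G F p a (1 / ℓ) (exp (-ℓ ^ s) / ℓ) → a ≤ a₀ → HasColouring G F p := by
  obtain ⟨θ, d, hθ, hθk, hd, hstep⟩ := exists_nibble_parameters k ha₀ ha₀₁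
  obtain ⟨N, hN⟩ := exists_nat_ge (a₀ / d)
  rw [div_le_iff₀ hd] at hN
  have htail := eventually_mul_exp_neg_mul_le_pow hs
    (c := θ ^ 3 / (16 * (k + 1) ^ 2 * 4 ^ N)) (C := 8 * (k + 1) ^ 5) (K := 2 ^ N)
    (by positivity) (by positivity) (by positivity) 9
  filter_upwards [htail] with ℓ hℓ V A C _ _ vert G F p a hG hp ha
  refine hp.hasColouring_of_iterate hG hθ hθk hd.le hstep N ha ?_ ?_
  · linarith [mul_nonneg (k.cast_nonneg : (0 : ℝ) ≤ k) (by linarith : 0 ≤ N * d - a)]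
  · convert hℓ using 3
    rw [nibbleTail, ← mul_assoc, mul_one_div, div_div_eq_mul_div, ← div_mul_eq_mul_div]

end Asymptotics

section ListColouring

section NormalizedWeight

variable {ι α : Type*} [DecidableEq α] {E : Finset ι} {L : ι → Finset α} {μ : ι → α → ℝ} {ℓ : ℝ}

/-- The weights `μ / ℓ`, extended by zero to the colours outside the lists. -/
noncomputable def normalizedWeight (E : Finset ι) (L : ι → Finset α) (μ : ι → α → ℝ) (ℓ : ℝ)
    (x : E × E.biUnion L) : ℝ :=
  if x.2.1 ∈ L x.1 then μ x.1 x.2 / ℓ else 0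

theorem sum_biUnion_ite_mem {e : ι} (he : e ∈ E) (f : α → ℝ) :
    ∑ c : E.biUnion L, (if c.1 ∈ L e then f c else 0) = ∑ c ∈ L e, f c := by
  rw [sum_coe_sort (E.biUnion L) fun c => if c ∈ L e then f c else 0, sum_ite_mem,
    inter_eq_right.2 (subset_biUnion_of_mem L he)]

theorem mem_of_normalizedWeight_ne_zero {x : E × E.biUnion L}
    (hx : normalizedWeight E L μ ℓ x ≠ 0) : x.2.1 ∈ L x.1 :=
  by_contra fun h => hx (if_neg h)

theorem normalizedWeight_nonneg (hμ : ∀ e ∈ E, ∀ c ∈ L e, 0 ≤ μ e c) (hℓ : 0 ≤ ℓ)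
    (x : E × E.biUnion L) : 0 ≤ normalizedWeight E L μ ℓ x := by
  unfold normalizedWeight
  split_ifs with h
  exacts [div_nonneg (hμ _ x.1.2 _ h) hℓ, le_rfl]

end NormalizedWeight

variable {V : Type} [DecidableEq V] {E : Finset (Finset V)} {σ : Finset V → Finset V → ℕ ≃ ℕ}
  {L : Finset V → Finset ℕ} {μ : Finset V → ℕ → ℝ} {ℓ n : ℝ}

theorem HIncident.symm {e f : Finset V} (h : HIncident e f) : HIncident f e :=
  ⟨h.1.symm, inter_comm e f ▸ h.2⟩

theorem IsEdgeCorrespondence.blocks_symm (hσ : IsEdgeCorrespondence E σ) {e f : Finset V}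
    (he : e ∈ E) (hf : f ∈ E) (hef : HIncident e f) {c c' : ℕ} (h : σ e f c = c') :
    σ f e c' = c := by
  rw [hσ e he f hf hef, Equiv.symm_apply_eq, h]

/-- The graph of mutually blocking pairs (edge, listed colour); its independent sets are the
partial colourings. -/
def blockingGraph (hσ : IsEdgeCorrespondence E σ) (L : Finset V → Finset ℕ) :
    SimpleGraph (E × E.biUnion L) where
  Adj x y := HIncident x.1.1 y.1.1 ∧ σ x.1 y.1 x.2 = y.2.1 ∧ x.2.1 ∈ L x.1 ∧ y.2.1 ∈ L y.1
  symm := ⟨fun x y h => ⟨h.1.symm, hσ.blocks_symm x.1.2 y.1.2 h.1 h.2.1, h.2.2.2, h.2.2.1⟩⟩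
  loopless := ⟨fun _ h => h.1.1 rfl⟩

theorem isLinearCover_blockingGraph {k : ℕ} (hσ : IsEdgeCorrespondence E σ)
    (hcard : ∀ e ∈ E, #e ≤ k) (hlin : ∀ e ∈ E, ∀ f ∈ E, e ≠ f → #(e ∩ f) ≤ 1) :
    IsLinearCover (Subtype.val : E → Finset V) (blockingGraph hσ L) k where
  card_le e := hcard e e.2
  subsingleton_inter e f hef := by
    rw [← coe_inter, ← card_le_one_iff_subsingleton]
    exact hlin e e.2 f f.2 (Subtype.coe_ne_coe.2 hef)
  fst_ne x y h := Subtype.coe_ne_coe.1 h.1.1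
  not_disjoint x y h := by
    classical
    rw [not_disjoint_iff_nonempty_inter]
    convert h.1.2
  eq_of_adj x y z hy hz hyz := by
    refine Prod.ext hyz (Subtype.ext ?_)
    rw [← hy.2.1, ← hz.2.1, hyz]

theorem sum_branch_normalizedWeight_le (hσ : IsEdgeCorrespondence E σ)
    (hμ : ∀ e ∈ E, ∀ c ∈ L e, 0 ≤ μ e c) (hℓ : 0 ≤ ℓ) (x : E × E.biUnion L) (v : V) :
    ∑ y ∈ branch Subtype.val (blockingGraph hσ L) x v, normalizedWeight E L μ ℓ y ≤
      NWeight E L μ σ x.1 v x.2 / ℓ := by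
  classical
  have hmem : ∀ y ∈ branch Subtype.val (blockingGraph hσ L) x v,
      (v ∈ y.1.1 ∧ y.1.1 ≠ x.1.1) ∧ σ y.1 x.1 y.2 = x.2 := fun y hy => by
    obtain ⟨hadj, hv⟩ := mem_branch.1 hy
    exact ⟨⟨hv, hadj.1.1.symm⟩, hadj.symm.2.1⟩
  calc ∑ y ∈ branch Subtype.val (blockingGraph hσ L) x v, normalizedWeight E L μ ℓ y
      ≤ ∑ y : E × E.biUnion L with (v ∈ y.1.1 ∧ y.1.1 ≠ x.1.1) ∧ σ y.1 x.1 y.2 = x.2,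
          normalizedWeight E L μ ℓ y :=
        sum_le_sum_of_subset_of_nonneg (fun y hy => mem_filter.2 ⟨mem_univ y, hmem y hy⟩)
          fun y _ _ => normalizedWeight_nonneg hμ hℓ y
    _ = ∑ e : E, if v ∈ e.1 ∧ e.1 ≠ x.1.1 then
          ∑ c : E.biUnion L, (if c.1 ∈ L e then if σ e x.1 c = x.2 then μ e c / ℓ else 0 else 0)
          else 0 := by
        rw [sum_filter, Fintype.sum_prod_type]
        refine sum_congr rfl fun e _ => ?_
        rw [← sum_const_zero, ← sum_ite_irrel]
        refine sum_congr rfl fun c _ => ?_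
        simp only [normalizedWeight]
        split_ifs <;> simp_all
    _ = ∑ e : E, if v ∈ e.1 ∧ e.1 ≠ x.1.1 then
          ∑ c ∈ L e, (if σ e x.1 c = x.2 then μ e c / ℓ else 0) else 0 := by
        refine sum_congr rfl fun e _ => ?_
        rw [sum_biUnion_ite_mem e.2 fun c => if σ e x.1 c = x.2 then μ e c / ℓ else 0]
    _ = NWeight E L μ σ x.1 v x.2 / ℓ := by
        rw [sum_coe_sort E fun e => if v ∈ e ∧ e ≠ x.1.1 then
          ∑ c ∈ L e, (if σ e x.1 c = x.2 then μ e c / ℓ else 0) else 0]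
        simp only [NWeight, sum_div, sum_filter, ite_div, zero_div]

theorem nibbleState_normalizedWeight (hσ : IsEdgeCorrespondence E σ) {t : ℝ} (ht : 0 < t)
    (hn : 0 ≤ n) (hnℓ : n ≤ ℓ) (hℓ : 1 ≤ ℓ) (hμ : ∀ e ∈ E, ∀ c ∈ L e, t ≤ μ e c ∧ μ e c ≤ 1)
    (ht₁ : t ≤ 1) (hsum : ∀ e ∈ E, ∑ c ∈ L e, μ e c = ℓ)
    (hN : ∀ e ∈ E, ∀ v ∈ e, ∀ c ∈ L e, NWeight E L μ σ e v c ≤ n) :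
    NibbleState Subtype.val (blockingGraph hσ L) univ (normalizedWeight E L μ ℓ) (n / ℓ) (1 / ℓ)
      (t / ℓ) := by
  have hℓ₀ : 0 < ℓ := zero_lt_one.trans_le hℓ
  have hμ₀ : ∀ e ∈ E, ∀ c ∈ L e, 0 ≤ μ e c := fun e he c hc => ht.le.trans (hμ e he c hc).1
  refine ⟨by positivity, div_le_one_of_le₀ hnℓ hℓ₀.le, by positivity, by positivity,
    div_le_one_of_le₀ (ht₁.trans hℓ) hℓ₀.le, normalizedWeight_nonneg hμ₀ hℓ₀.le, fun x => ?_,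
    fun x hx => ?_, fun x _ => mem_univ _, fun e _ => ?_, fun x y h => ?_, fun x v hv => ?_⟩
  · unfold normalizedWeight
    split_ifs with h
    · have := (hμ _ x.1.2 _ h).2
      gcongr
    · positivity
  · rw [normalizedWeight, if_pos (mem_of_normalizedWeight_ne_zero hx)]
    have := (hμ _ x.1.2 _ (mem_of_normalizedWeight_ne_zero hx)).1
    gcongr
  · simp only [normalizedWeight]
    rw [sum_biUnion_ite_mem e.2 (μ e · / ℓ), ← sum_div, hsum e e.2, div_self hℓ₀.ne']
  · rw [normalizedWeight, if_pos h.2.2.1]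
    exact (div_pos (ht.trans_le (hμ _ x.1.2 _ h.2.2.1).1) hℓ₀).ne'
  · by_cases hx : x.2.1 ∈ L x.1
    · refine (sum_branch_normalizedWeight_le hσ hμ₀ hℓ₀.le x v).trans ?_
      have := hN x.1 x.1.2 v hv x.2 hx
      gcongr
    · have hempty : branch Subtype.val (blockingGraph hσ L) x v = ∅ :=
        eq_empty_of_forall_notMem fun y hy => hx (mem_branch.1 hy).1.2.2.1
      rw [hempty, sum_empty]
      positivity

theorem exists_isLσColouring_of_hasColouring (hσ : IsEdgeCorrespondence E σ)
    (h : HasColouring (blockingGraph hσ L) univ (normalizedWeight E L μ ℓ)) :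
    ∃ γ, IsLσColouring E L σ γ := by
  obtain ⟨S, hindep, hS, hcover⟩ := h
  have hcolour : ∀ e, ∃ c : ℕ, ∀ he : e ∈ E, ∃ x ∈ S, x.1 = ⟨e, he⟩ ∧ x.2.1 = c := fun e => by
    by_cases he : e ∈ E
    · obtain ⟨c, hc⟩ := hcover ⟨e, he⟩ (mem_univ _)
      exact ⟨c, fun _ => ⟨_, hc, rfl, rfl⟩⟩
    · exact ⟨0, fun h => absurd h he⟩
  choose γ hγ using hcolour
  have hlist : ∀ x ∈ S, x.2.1 ∈ L x.1 := fun x hx => mem_of_normalizedWeight_ne_zero (hS x hx)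
  refine ⟨γ, fun e he => ?_, fun e he f hf hef hbad => ?_⟩
  · obtain ⟨x, hx, hxe, hxc⟩ := hγ e he
    have := hlist x hx
    rwa [hxe, hxc] at this
  · obtain ⟨x, hx, hxe, hxc⟩ := hγ e he
    obtain ⟨y, hy, hyf, hyc⟩ := hγ f hf
    have hadj : (blockingGraph hσ L).Adj x y := by
      refine ⟨?_, ?_, hlist x hx, hlist y hy⟩
      · rwa [hxe, hyf]
      · rwa [hxe, hyf, hxc, hyc]
    exact hindep hx hy hadj.ne hadj

end ListColouring

theorem stmt_6_general (ε : ℝ) (hε : 0 < ε) (k : ℕ) :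
    ∃ δ : ℕ, ∀ (V : Type) [DecidableEq V] (E : Finset (Finset V))
      (σ : Finset V → Finset V → ℕ ≃ ℕ) (L : Finset V → Finset ℕ) (μ : Finset V → ℕ → ℝ)
      (ℓ n : ℝ), (∀ e ∈ E, #e ≤ k) → (∀ e ∈ E, ∀ f ∈ E, e ≠ f → #(e ∩ f) ≤ 1) →
      IsEdgeCorrespondence E σ → (δ : ℝ) < ℓ →
      (∀ e ∈ E, ∀ c ∈ L e, exp (-n ^ (1 / 20 : ℝ)) ≤ μ e c ∧ μ e c ≤ 1) → 1 + ε < ℓ / n →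
      (∀ e ∈ E, ∑ c ∈ L e, μ e c = ℓ) →
      (∀ e ∈ E, ∀ v ∈ e, ∀ c ∈ L e, NWeight E L μ σ e v c ≤ n) →
      ∃ γ, IsLσColouring E L σ γ := by
  have ha₀ : (1 + ε)⁻¹ < 1 := inv_lt_one_of_one_lt₀ (by linarith)
  obtain ⟨X, hX⟩ := Filter.eventually_atTop.1
    (NibbleState.eventually_hasColouring k (by positivity) ha₀ (by norm_num : (1 / 20 : ℝ) < 1))
  refine ⟨max ⌈X⌉₊ 1, fun V _ E σ L μ ℓ n hcard hlin hσ hℓ hμ hratio hsum hN => ?_⟩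
  rw [Nat.cast_max, max_lt_iff, Nat.cast_one] at hℓ
  have hℓ₀ : 0 < ℓ := zero_lt_one.trans hℓ.2
  have hn : 0 < n := (div_pos_iff_of_pos_left hℓ₀).1 ((by positivity : 0 < 1 + ε).trans hratio)
  have hnℓ : n ≤ ℓ := by
    rw [lt_div_iff₀ hn] at hratio
    nlinarith
  have ha : n / ℓ ≤ (1 + ε)⁻¹ := by
    rw [← inv_div]
    exact inv_anti₀ (by positivity) hratio.le
  have hτ : exp (-ℓ ^ (1 / 20 : ℝ)) ≤ exp (-n ^ (1 / 20 : ℝ)) := by gcongr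
  refine exists_isLσColouring_of_hasColouring hσ (hX ℓ ((Nat.le_ceil X).trans hℓ.1.le)
    (isLinearCover_blockingGraph hσ hcard hlin)
    (nibbleState_normalizedWeight hσ (exp_pos _) hn.le hnℓ hℓ.2.le
      (fun e he c hc => (hμ e he c hc).imp_left hτ.trans) ?_ hsum hN) ha)
  rw [exp_le_one_iff, neg_nonpos]
  positivity

theorem stmt_6 :
    ∀ (ε : ℝ) (k : ℕ), 0 < ε → ε ≤ 1 / 4 →
    ∃ δ : ℕ, ∀ (V : Type) [Fintype V] [DecidableEq V]
      (E : Finset (Finset V)) (σ : Finset V → Finset V → ℕ ≃ ℕ)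
      (L : Finset V → Finset ℕ) (μ : Finset V → ℕ → ℝ) (ℓ n : ℝ),
      -- G is k-uniform
      (∀ e ∈ E, e.card = k) →
      -- G is linear
      (∀ e ∈ E, ∀ f ∈ E, e ≠ f → (e ∩ f).card ≤ 1) →
      IsEdgeCorrespondence E σ →
      -- (L, μ) is an assignment of weighted lists: weights lie in (0,1]
      (∀ e ∈ E, ∀ c ∈ L e, 0 < μ e c ∧ μ e c ≤ 1) →
      -- ℓ, n > δ
      (δ : ℝ) < ℓ → (δ : ℝ) < n →
      -- (a)
      (∀ e ∈ E, ∀ c ∈ L e, Real.exp (-(n ^ ((1 : ℝ) / 20))) ≤ μ e c ∧ μ e c ≤ 1) →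
      -- (b)
      1 + ε < ℓ / n → ℓ / n < 3 * Real.exp 1 * k →
      -- (c)
      (∀ e ∈ E, ∑ c ∈ L e, μ e c = ℓ) →
      -- (d)
      (∀ e ∈ E, ∀ v ∈ e, ∀ c : ℕ, NWeight E L μ σ e v c ≤ n) →
      -- conclusion: there is a partial (L,σ)-colouring, i.e. an (L,σ)-colouring γ of
      -- the subhypergraph with edge set E₀ ⊆ E, with the stated properties; here
      -- E \ E₀ is the set E' of uncoloured edges, and for e ∈ E' the truncated list
      -- L'(e) is (L e).filter (fun c => ∀ f ∈ E₀, HIncident f e → σ f e (γ f) ≠ c),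
      -- i.e. L(e) minus the colours blocked at e by colours of coloured incident edges.
      ∃ (E₀ : Finset (Finset V)) (γ : Finset V → ℕ),
        E₀ ⊆ E ∧ IsLσColouring E₀ L σ γ ∧
        ∃ (μ' : Finset V → ℕ → ℝ) (ℓ' n' : ℝ),
          0 < ℓ' ∧ 0 < n' ∧
          -- μ' maps L'(e) into (0,1]
          (∀ e ∈ E \ E₀,
            ∀ c ∈ (L e).filter (fun c => ∀ f ∈ E₀, HIncident f e → σ f e (γ f) ≠ c),
              0 < μ' e c ∧ μ' e c ≤ 1) ∧
          -- (a')
          (1 - 5 * k / Real.log n) * n ≤ n' ∧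
          -- (b')
          (1 + ε / (16 * Real.log n)) * (ℓ / n) ≤ ℓ' / n' ∧
          -- (c')
          (∀ e ∈ E \ E₀,
            ∑ c ∈ (L e).filter (fun c => ∀ f ∈ E₀, HIncident f e → σ f e (γ f) ≠ c),
              μ' e c = ℓ') ∧
          -- (d')
          (∀ e ∈ E \ E₀, ∀ v ∈ e,
            ∀ c ∈ (L e).filter (fun c => ∀ f ∈ E₀, HIncident f e → σ f e (γ f) ≠ c),
              NWeight (E \ E₀)
                (fun f => (L f).filter (fun c' => ∀ g ∈ E₀, HIncident g f → σ g f (γ g) ≠ c'))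
                μ' σ e v c ≤ n') ∧
          -- (e')
          (∀ e ∈ E \ E₀,
            ∀ c ∈ (L e).filter (fun c => ∀ f ∈ E₀, HIncident f e → σ f e (γ f) ≠ c),
              (1 - 2 / ℓ) * μ e c ≤ μ' e c ∧ μ' e c ≤ μ e c) := by
  intro ε k hε _
  obtain ⟨δ, hδ⟩ := stmt_6_general ε hε k
  refine ⟨max δ 1, fun V _ _ E σ L μ ℓ n hcard hlin hσ _ hℓ hn hμ hratio _ hsum hN => ?_⟩
  rw [Nat.cast_max, max_lt_iff, Nat.cast_one] at hℓ hn
  obtain ⟨γ, hγ⟩ := hδ V E σ L μ ℓ n (fun e he => (hcard e he).le) hlin hσ hℓ.1 hμ hratio hsum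
    fun e he v hv c _ => hN e he v hv c
  have hlog : 0 < Real.log n := Real.log_pos hn.2
  have hn₀ : 0 < n := zero_lt_one.trans hn.2
  have hℓ₀ : 0 < ℓ := zero_lt_one.trans hℓ.2
  have hn' : (1 - 5 * k / Real.log n) * n ≤ n :=
    mul_le_of_le_one_left hn₀.le (sub_le_self 1 (by positivity))
  refine ⟨E, γ, subset_rfl, hγ, μ, (1 + ε / (16 * Real.log n)) * ℓ, n, by positivity, hn₀, ?_, hn',
    (mul_div_assoc _ _ _).ge, ?_, ?_, ?_⟩ <;>
  simp only [sdiff_self, bot_eq_empty, notMem_empty, IsEmpty.forall_iff, implies_true]
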